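/- There exist constants θ, γ ∈ (0, 1/2) and c ≥ 1 with the following property. Let Q ⊂ ℝ² be open and let h ≥ 0 be a weak solution of v∂ₓh − ∂_vvh = 0 in Q. Then for every R ∈ (0,2] and every (x₀,v₀) ∈ ℝ² such that {x ∈ ℝ : |x − x₀ − v₀t| < R³ for some t ∈ (−R², 0]} × (v₀−R, v₀+R) ⊂ Q, one has ess sup over A_γ × (v₀−θR, v₀+θR) of h ≤ c · ess inf over A₀ × (v₀−θR, v₀+θR) of h, where for s ∈ {0, γ} the set A_s is defined by A_s := {x ∈ ℝ : |x − x₀ − v₀(t − R²s)| < (θR)³ for some t ∈ (−(θR)², 0]}. -/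

import Mathlib

noncomputable section

open MeasureTheory Set Filter
open scoped ENNReal

/-- The one-dimensional phase space, with points `p = (x, v)`. -/
abbrev P2 : Type := ℝ × ℝ

/-- `hv` is the weak derivative of `h` in the second (velocity) variable on `D`. -/
def IsWeakVDeriv (D : Set P2) (h hv : P2 → ℝ) : Prop :=
  ∀ ψ : P2 → ℝ, ContDiff ℝ ((⊤ : ℕ∞) : WithTop ℕ∞) ψ → HasCompactSupport ψ →
    tsupport ψ ⊆ D →
    (∫ p in D, h p * fderiv ℝ ψ p ((0:ℝ), (1:ℝ))) = -∫ p in D, hv p * ψ p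

/-- Weak solution of `v ∂ₓ h − ∂ᵥᵥ h = 0` in an (open) set `Q` (interior notion, no
boundary condition). -/
def IsWeakSolOpen (Q : Set P2) (h hv : P2 → ℝ) : Prop :=
  LocallyIntegrableOn (fun p => h p ^ 2) Q ∧
  LocallyIntegrableOn (fun p => hv p ^ 2) Q ∧
  IsWeakVDeriv Q h hv ∧
  ∀ ψ : P2 → ℝ, ContDiff ℝ ((⊤ : ℕ∞) : WithTop ℕ∞) ψ → HasCompactSupport ψ →
    tsupport ψ ⊆ Q →
    (-∫ p in Q, h p * (p.2 * fderiv ℝ ψ p ((1:ℝ), (0:ℝ))))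
        + (∫ p in Q, hv p * fderiv ℝ ψ p ((0:ℝ), (1:ℝ))) = 0

/-- The slanted block `A_s` in the space variable. -/
def Aslant (θ R x₀ v₀ s : ℝ) : Set ℝ :=
  {x : ℝ | ∃ t ∈ Set.Ioc (-(θ * R) ^ 2) (0:ℝ), |x - x₀ - v₀ * (t - R ^ 2 * s)| < (θ * R) ^ 3}


/-!
In kinetic coordinates centred at any point, a solution of `v∂ₓh = ∂ᵥᵥh` is a solution of the
Kolmogorov equation that does not depend on time, and the fundamental solution of that equation is
explicit. Switching it off shortly before its pole turns the point mass into a smooth source, so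
testing with it gives a regularised value at the pole. This value is at most a multiple of the mass
of a small cube in the past of the pole (test with a cutoff times the kernel), and at least a
multiple of the mass of a still earlier box (test with a convex truncation of a weighted kernel).
As the solution is constant in time, the small cube of any point of the upper block can be moved
in time into the earlier box of any point of the lower block, which compares the two regularised
values. Averaging over the poles and letting the sources shrink gives the pointwise comparison.
-/

open scoped ContDiff Topology

/-! ### The equation in the sense of distributions -/

section TestFunctions

variable {E : Type*} [NormedAddCommGroup E] [NormedSpace ℝ E]

lemma contDiff_fderiv_apply {f : E → ℝ} (hf : ContDiff ℝ ∞ f) (w : E) :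
    ContDiff ℝ ∞ fun z => fderiv ℝ f z w :=
  (hf.fderiv_right (by simp)).clm_apply contDiff_const

lemma fderiv_apply_eq_zero_of_notMem_tsupport {f : E → ℝ} {z : E} (hz : z ∉ tsupport f) (w : E) :
    fderiv ℝ f z w = 0 :=
  image_eq_zero_of_notMem_tsupport (f := fun z => fderiv ℝ f z w)
    fun h => hz (tsupport_fderiv_apply_subset ℝ w h)

lemma fderiv_fderiv_apply_eq_zero_of_notMem_tsupport {f : E → ℝ} {z : E} (hz : z ∉ tsupport f)
    (w w' : E) : fderiv ℝ (fun y => fderiv ℝ f y w) z w' = 0 :=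
  fderiv_apply_eq_zero_of_notMem_tsupport
    (fun h => hz (tsupport_fderiv_apply_subset ℝ w h)) w'

end TestFunctions

/-- The operator `v∂ₓ + ∂ᵥᵥ`, minus the formal adjoint of `v∂ₓ - ∂ᵥᵥ`. -/
def stationaryOp (ψ : P2 → ℝ) (p : P2) : ℝ :=
  p.2 * fderiv ℝ ψ p (1, 0) + fderiv ℝ (fun q => fderiv ℝ ψ q (0, 1)) p (0, 1)

/-- Solutions of `v∂ₓh - ∂ᵥᵥh = 0` in `Q` in the sense of distributions, which need no weak
derivative in `v`. -/
def IsDistribSol (Q : Set P2) (h : P2 → ℝ) : Prop :=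
  LocallyIntegrableOn h Q ∧
    ∀ ψ : P2 → ℝ, ContDiff ℝ ∞ ψ → HasCompactSupport ψ → tsupport ψ ⊆ Q →
      ∫ p in Q, h p * stationaryOp ψ p = 0

/-- Measures `ν` that solve `v∂ₓν - ∂ᵥᵥν = 0` against all test functions supported in `K`. -/
def IsMeasureSol (K : Set P2) (ν : Measure P2) : Prop :=
  ∀ ψ : P2 → ℝ, ContDiff ℝ ∞ ψ → HasCompactSupport ψ → tsupport ψ ⊆ K →
    ∫ p, stationaryOp ψ p ∂ν = 0

lemma stationaryOp_eq_zero_of_notMem_tsupport {ψ : P2 → ℝ} {p : P2} (hp : p ∉ tsupport ψ) :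
    stationaryOp ψ p = 0 := by
  rw [stationaryOp, fderiv_apply_eq_zero_of_notMem_tsupport hp,
    fderiv_fderiv_apply_eq_zero_of_notMem_tsupport hp, mul_zero, add_zero]

lemma locallyIntegrableOn_of_sq {X : Type*} [TopologicalSpace X] [SecondCountableTopology X]
    [MeasurableSpace X] {μ : Measure X} [IsLocallyFiniteMeasure μ] {Q : Set X}
    (hQ : MeasurableSet Q) {h : X → ℝ} (h0 : ∀ p ∈ Q, 0 ≤ h p)
    (h2 : LocallyIntegrableOn (fun p => h p ^ 2) Q μ) : LocallyIntegrableOn h Q μ := by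
  have hmeas : AEStronglyMeasurable h (μ.restrict Q) := by
    refine (Real.continuous_sqrt.comp_aestronglyMeasurable h2.aestronglyMeasurable).congr ?_
    filter_upwards [ae_restrict_mem hQ] with p hp
    exact Real.sqrt_sq (h0 p hp)
  have hone : LocallyIntegrableOn (fun _ : X => (1 : ℝ)) Q μ :=
    (locallyIntegrable_const 1).locallyIntegrableOn Q
  intro x hx
  obtain ⟨s, hs, hint⟩ := (h2.add hone) x hx
  refine ⟨s ∩ Q, inter_mem hs self_mem_nhdsWithin, ?_⟩
  refine Integrable.mono' (hint.mono_set inter_subset_left)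
    (hmeas.mono_measure (Measure.restrict_mono inter_subset_right le_rfl))
    (Eventually.of_forall fun p => ?_)
  simp only [Pi.add_apply, Real.norm_eq_abs]
  rw [abs_le]
  constructor <;> nlinarith [sq_nonneg (h p - 1), sq_nonneg (h p + 1)]

lemma integrableOn_mul_of_tsupport_subset {X : Type*} [TopologicalSpace X] [MeasurableSpace X]
    [OpensMeasurableSpace X] [T2Space X] [SecondCountableTopology X] {μ : Measure X} {Q : Set X}
    {h k : X → ℝ} (hh : LocallyIntegrableOn h Q μ) (hk : Continuous k)
    (hkc : HasCompactSupport k) (hkQ : tsupport k ⊆ Q) :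
    IntegrableOn (fun p => h p * k p) Q μ := by
  have hint : IntegrableOn (fun p => h p * k p) (tsupport k) μ :=
    (hh.integrableOn_compact_subset hkQ hkc).mul_continuousOn hk.continuousOn hkc
  refine (hint.integrable_of_forall_notMem_eq_zero fun p hp => ?_).integrableOn
  rw [image_eq_zero_of_notMem_tsupport hp, mul_zero]

/-- Both weak identities are tested: the first one with `ψ`, the second one with `∂ᵥψ`. -/
lemma IsWeakSolOpen.isDistribSol {Q : Set P2} {h hv : P2 → ℝ} (hs : IsWeakSolOpen Q h hv)
    (hQ : IsOpen Q) (h0 : ∀ p ∈ Q, 0 ≤ h p) : IsDistribSol Q h := by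
  obtain ⟨hsq, -, hderiv, heq⟩ := hs
  have hloc := locallyIntegrableOn_of_sq hQ.measurableSet h0 hsq
  refine ⟨hloc, fun ψ hψ hψc hψQ => ?_⟩
  have hvψ := contDiff_fderiv_apply hψ (0, 1)
  have hvψc : HasCompactSupport fun q => fderiv ℝ ψ q (0, 1) := hψc.fderiv_apply (𝕜 := ℝ) _
  have hvψQ := (tsupport_fderiv_apply_subset ℝ (0, 1)).trans hψQ
  have hint_x : IntegrableOn (fun p => h p * (p.2 * fderiv ℝ ψ p (1, 0))) Q :=
    integrableOn_mul_of_tsupport_subset hloc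
      (continuous_snd.mul (contDiff_fderiv_apply hψ _).continuous)
      (hψc.fderiv_apply (𝕜 := ℝ) _).mul_left
      ((tsupport_mul_subset_right).trans ((tsupport_fderiv_apply_subset ℝ _).trans hψQ))
  have hint_v : IntegrableOn
      (fun p => h p * fderiv ℝ (fun q => fderiv ℝ ψ q (0, 1)) p (0, 1)) Q :=
    integrableOn_mul_of_tsupport_subset hloc (contDiff_fderiv_apply hvψ _).continuous
      (hvψc.fderiv_apply (𝕜 := ℝ) _) ((tsupport_fderiv_apply_subset ℝ _).trans hvψQ)
  have hψ_eq := heq ψ hψ hψc hψQ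
  have hvψ_eq := hderiv _ hvψ hvψc hvψQ
  simp only [stationaryOp, mul_add]
  rw [integral_add hint_x hint_v, hvψ_eq]
  linarith

lemma integral_withDensity_ofReal {X : Type*} [MeasurableSpace X] {μ : Measure X} {K : Set X}
    (hK : MeasurableSet K) {h : X → ℝ} (hh : AEMeasurable h (μ.restrict K))
    (h0 : ∀ p ∈ K, 0 ≤ h p) (f : X → ℝ) :
    ∫ p, f p ∂((μ.restrict K).withDensity fun p => ENNReal.ofReal (h p)) =
      ∫ p in K, h p * f p ∂μ := by
  rw [integral_withDensity_eq_integral_toReal_smul₀ hh.ennreal_ofReal (by simp)]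
  exact setIntegral_congr_fun hK fun p hp => by
    simp only [ENNReal.toReal_ofReal (h0 p hp), smul_eq_mul]

lemma IsDistribSol.isMeasureSol {Q K : Set P2} {h : P2 → ℝ} (hs : IsDistribSol Q h)
    (hK : IsCompact K) (hKQ : K ⊆ Q) (h0 : ∀ p ∈ K, 0 ≤ h p) :
    IsMeasureSol K ((volume.restrict K).withDensity fun p => ENNReal.ofReal (h p)) := by
  intro ψ hψ hψc hψK
  have hint : IntegrableOn h K := hs.1.integrableOn_compact_subset hKQ hK
  have hzero : ∀ p ∉ K, h p * stationaryOp ψ p = 0 := fun p hp => by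
    rw [stationaryOp_eq_zero_of_notMem_tsupport fun hp' => hp (hψK hp'), mul_zero]
  calc ∫ p, stationaryOp ψ p ∂((volume.restrict K).withDensity fun p => ENNReal.ofReal (h p))
      = ∫ p in K, h p * stationaryOp ψ p :=
        integral_withDensity_ofReal hK.measurableSet hint.1.aemeasurable h0 _
    _ = ∫ p, h p * stationaryOp ψ p := setIntegral_eq_integral_of_forall_compl_eq_zero hzero
    _ = ∫ p in Q, h p * stationaryOp ψ p :=
        (setIntegral_eq_integral_of_forall_compl_eq_zero
          fun p hp => hzero p fun hp' => hp (hKQ hp')).symm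
    _ = 0 := hs.2 ψ hψ hψc (hψK.trans hKQ)

/-! ### Lifting to the time-dependent Kolmogorov equation -/

/-- The phase space of the time-dependent equation, with points `z = (t, x, v)`. -/
abbrev P3 : Type := ℝ × ℝ × ℝ

/-- The operator `∂ₜ + v∂ₓ + ∂ᵥᵥ`, minus the formal adjoint of the Kolmogorov operator
`∂ₜ + v∂ₓ - ∂ᵥᵥ`. -/
def kolmogorovOp (φ : P3 → ℝ) (z : P3) : ℝ :=
  fderiv ℝ φ z (1, 0, 0) + z.2.2 * fderiv ℝ φ z (0, 1, 0)
    + fderiv ℝ (fun w => fderiv ℝ φ w (0, 0, 1)) z (0, 0, 1)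

/-- Measures `μ` that solve the Kolmogorov equation `(∂ₜ + v∂ₓ - ∂ᵥᵥ)μ = 0` against all test
functions supported in `S`. -/
def IsKolmogorovSol (S : Set P3) (μ : Measure P3) : Prop :=
  ∀ φ : P3 → ℝ, ContDiff ℝ ∞ φ → HasCompactSupport φ → tsupport φ ⊆ S →
    ∫ z, kolmogorovOp φ z ∂μ = 0

/-- The physical point with kinetic coordinates `y = (t, x, v)` of scale `R` centred at `p`. The
stationary transport along `p.2` is what makes it depend on the time `t`. -/
def kinPoint (R : ℝ) (p : P2) (y : P3) : P2 :=
  (p.1 + R ^ 2 * p.2 * y.1 + R ^ 3 * y.2.1, p.2 + R * y.2.2)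

/-- The kinetic coordinates of scale `R` centred at `p` of a time `z.1` and a physical point
`z.2`. -/
def kin (R : ℝ) (p : P2) (z : P3) : P3 :=
  (z.1, (z.2.1 - p.1 - R ^ 2 * p.2 * z.1) / R ^ 3, (z.2.2 - p.2) / R)

lemma continuous_kinPoint (R : ℝ) (p : P2) : Continuous (kinPoint R p) := by
  unfold kinPoint; fun_prop

/-- The kinetic coordinates `kin R p` as a homeomorphism, with inverse
`y ↦ (y.1, kinPoint R p y)`. -/
def kinHomeo {R : ℝ} (hR : R ≠ 0) (p : P2) : P3 ≃ₜ P3 where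
  toFun := kin R p
  invFun y := (y.1, kinPoint R p y)
  left_inv z := by
    ext
    · rfl
    · simp only [kin, kinPoint]; field_simp; ring
    · simp only [kin, kinPoint]; field_simp; ring
  right_inv y := by
    ext
    · rfl
    · simp only [kin, kinPoint]; field_simp; ring
    · simp only [kin, kinPoint]; field_simp; ring
  continuous_toFun := by unfold kin; fun_prop
  continuous_invFun := continuous_fst.prodMk (continuous_kinPoint R p)

lemma kin_kinPoint {R : ℝ} (hR : R ≠ 0) (p : P2) (y : P3) :
    kin R p (y.1, kinPoint R p y) = y :=
  (kinHomeo hR p).apply_symm_apply y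

lemma kinPoint_kin {R : ℝ} (hR : R ≠ 0) (p : P2) (z : P3) : kinPoint R p (kin R p z) = z.2 :=
  congrArg Prod.snd ((kinHomeo hR p).symm_apply_apply z)

/-- The linear part of the affine map `kin R p`. -/
def kinLinear (R : ℝ) (p : P2) : P3 →L[ℝ] P3 :=
  LinearMap.toContinuousLinearMap
    { toFun := fun w => (w.1, (w.2.1 - R ^ 2 * p.2 * w.1) / R ^ 3, w.2.2 / R)
      map_add' := fun w w' => by ext <;> simp only [Prod.fst_add, Prod.snd_add] <;> ring
      map_smul' := fun c w => by
        ext <;> simp only [Prod.smul_fst, Prod.smul_snd, smul_eq_mul, RingHom.id_apply] <;> ring }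

lemma kinLinear_apply (R : ℝ) (p : P2) (w : P3) :
    kinLinear R p w = (w.1, (w.2.1 - R ^ 2 * p.2 * w.1) / R ^ 3, w.2.2 / R) := rfl

lemma hasFDerivAt_kin (R : ℝ) (p : P2) (z : P3) : HasFDerivAt (kin R p) (kinLinear R p) z := by
  have haffine : kin R p = fun w => kinLinear R p w + kin R p 0 := by
    ext w <;> simp only [kin, kinLinear_apply, Prod.fst_add, Prod.snd_add, Prod.fst_zero,
      Prod.snd_zero] <;> ring
  rw [haffine]
  exact (kinLinear R p).hasFDerivAt.add_const _

lemma contDiff_kin (R : ℝ) (p : P2) : ContDiff ℝ ∞ (kin R p) := by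
  unfold kin
  simp only [div_eq_mul_inv]
  fun_prop

lemma fderiv_comp_kin {f : P3 → ℝ} (hf : Differentiable ℝ f) (R : ℝ) (p : P2) (z w : P3) :
    fderiv ℝ (f ∘ kin R p) z w = fderiv ℝ f (kin R p z) (kinLinear R p w) := by
  rw [((hf _).hasFDerivAt.comp z (hasFDerivAt_kin R p z)).fderiv, ContinuousLinearMap.comp_apply]

lemma fderiv_apply_triple (f : P3 → ℝ) (z : P3) (a b c : ℝ) :
    fderiv ℝ f z (a, b, c) =
      a * fderiv ℝ f z (1, 0, 0) + b * fderiv ℝ f z (0, 1, 0) + c * fderiv ℝ f z (0, 0, 1) := by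
  have hsum : ((a, b, c) : P3) = a • ((1, 0, 0) : P3) + b • ((0, 1, 0) : P3)
      + c • ((0, 0, 1) : P3) := by simp
  rw [hsum, map_add, map_add, map_smul, map_smul, map_smul, smul_eq_mul, smul_eq_mul, smul_eq_mul]

lemma kolmogorovOp_kin {R : ℝ} (hR : R ≠ 0) (p : P2) {φ : P3 → ℝ} (hφ : ContDiff ℝ ∞ φ) (z : P3) :
    kolmogorovOp φ (kin R p z) = fderiv ℝ (φ ∘ kin R p) z (1, 0, 0)
      + R ^ 2 * (z.2.2 * fderiv ℝ (φ ∘ kin R p) z (0, 1, 0)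
        + fderiv ℝ (fun w => fderiv ℝ (φ ∘ kin R p) w (0, 0, 1)) z (0, 0, 1)) := by
  have hφ' : Differentiable ℝ φ := hφ.differentiable (by simp)
  have hvφ : Differentiable ℝ fun w => fderiv ℝ φ w (0, 0, 1) :=
    (contDiff_fderiv_apply hφ _).differentiable (by simp)
  have hv : (fun w => fderiv ℝ (φ ∘ kin R p) w (0, 0, 1)) =
      fun w => R⁻¹ * ((fun y => fderiv ℝ φ y (0, 0, 1)) ∘ kin R p) w := by
    ext w
    rw [fderiv_comp_kin hφ', kinLinear_apply, fderiv_apply_triple]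
    simp only [Function.comp_apply, mul_zero, sub_zero, zero_div, zero_mul, zero_add, one_div]
  rw [hv, fderiv_const_mul
    ((hvφ _).comp z (hasFDerivAt_kin R p z).differentiableAt), _root_.smul_apply,
    fderiv_comp_kin hvφ, fderiv_comp_kin hφ', fderiv_comp_kin hφ']
  simp only [kinLinear_apply]
  rw [fderiv_apply_triple φ _ 1 (_ / R ^ 3), fderiv_apply_triple φ _ 0 (_ / R ^ 3),
    fderiv_apply_triple (fun y => fderiv ℝ φ y (0, 0, 1)) _ 0 (_ / R ^ 3)]
  simp only [kolmogorovOp, kin, smul_eq_mul]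
  field_simp
  ring

section Slices

variable {F : Type*} [NormedAddCommGroup F] [NormedSpace ℝ F]

lemma fderiv_slice_snd {f : ℝ × F → ℝ} (hf : Differentiable ℝ f) (t : ℝ) (q w : F) :
    fderiv ℝ (fun q => f (t, q)) q w = fderiv ℝ f (t, q) (0, w) := by
  have hslice := (hf (t, q)).hasFDerivAt.comp q (hasFDerivAt_prodMk_right t q)
  rw [show (fun q => f (t, q)) = f ∘ fun q => (t, q) from rfl, hslice.fderiv,
    ContinuousLinearMap.comp_apply, ContinuousLinearMap.inr_apply]

lemma integral_fderiv_fst_eq_zero [MeasurableSpace F] [BorelSpace F] [SecondCountableTopology F]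
    {ν : Measure F} [SFinite ν] [IsFiniteMeasureOnCompacts ν] {f : ℝ × F → ℝ}
    (hf : ContDiff ℝ ∞ f) (hfc : HasCompactSupport f) :
    ∫ z, fderiv ℝ f z (1, 0) ∂(volume.prod ν) = 0 := by
  have hcont : Continuous fun z => fderiv ℝ f z (1, 0) := (contDiff_fderiv_apply hf _).continuous
  have hcomp : HasCompactSupport fun z => fderiv ℝ f z (1, 0) := hfc.fderiv_apply (𝕜 := ℝ) _
  have hslice : ∀ {g : ℝ × F → ℝ}, Continuous g → HasCompactSupport g → ∀ q,
      Integrable fun t => g (t, q) := fun {g} hg hgc q =>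
    (hg.comp (by fun_prop)).integrable_of_hasCompactSupport <|
      HasCompactSupport.intro (hgc.isCompact.image continuous_fst) fun t ht =>
        image_eq_zero_of_notMem_tsupport (f := g) fun h => ht ⟨(t, q), h, rfl⟩
  have hderiv : ∀ q t, HasDerivAt (fun t => f (t, q)) (fderiv ℝ f (t, q) (1, 0)) t := fun q t =>
    HasFDerivAt.comp_hasDerivAt (l := f) t (hf.differentiable (by simp) (t, q)).hasFDerivAt
      ((hasDerivAt_id t).prodMk (hasDerivAt_const t q))
  rw [integral_prod_symm _ (hcont.integrable_of_hasCompactSupport hcomp)]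
  simp only [fun q => integral_eq_zero_of_hasDerivAt_of_integrable (hderiv q)
    (hslice hcont hcomp q) (hslice hf.continuous hfc q), integral_zero]

end Slices

/-- The lift of `ν` to a measure in the kinetic coordinates of scale `R` centred at `p`: constant
in time, up to a constant Jacobian. -/
def liftMeasure (R : ℝ) (ν : Measure P2) (p : P2) : Measure P3 :=
  (volume.prod ν).map (kin R p)

section Lift

variable {R : ℝ} {ν : Measure P2}

lemma integral_liftMeasure (hR : R ≠ 0) (p : P2) (f : P3 → ℝ) :
    ∫ y, f y ∂liftMeasure R ν p = ∫ z, f (kin R p z) ∂(volume.prod ν) :=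
  (kinHomeo hR p).measurableEmbedding.integral_map f

lemma isFiniteMeasureOnCompacts_liftMeasure [SFinite ν] [IsFiniteMeasureOnCompacts ν]
    (hR : R ≠ 0) (p : P2) :
    IsFiniteMeasureOnCompacts (liftMeasure R ν p) :=
  Measure.IsFiniteMeasureOnCompacts.map _ (kinHomeo hR p)

/-- The `∂ₜ` part integrates to zero in time, the rest vanishes on each time slice. -/
lemma IsMeasureSol.isKolmogorovSol_liftMeasure [SFinite ν] [IsFiniteMeasureOnCompacts ν]
    (hR : R ≠ 0) {K : Set P2} (hν : IsMeasureSol K ν) {S : Set P3} {p : P2}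
    (hS : ∀ y ∈ S, kinPoint R p y ∈ K) : IsKolmogorovSol S (liftMeasure R ν p) := by
  intro φ hφ hφc hφS
  set Φ : P3 → ℝ := φ ∘ kin R p
  have hΦ : ContDiff ℝ ∞ Φ := hφ.comp (contDiff_kin R p)
  have hΦc : HasCompactSupport Φ := hφc.comp_homeomorph (kinHomeo hR p)
  have hvΦ := contDiff_fderiv_apply hΦ (0, 0, 1)
  set Y : P3 → ℝ := fun z => z.2.2 * fderiv ℝ Φ z (0, 1, 0)
    + fderiv ℝ (fun w => fderiv ℝ Φ w (0, 0, 1)) z (0, 0, 1)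
  have hY : ∀ t q, Y (t, q) = stationaryOp (fun q => Φ (t, q)) q := fun t q => by
    have hv : (fun q => fderiv ℝ (fun q => Φ (t, q)) q (0, 1)) =
        fun q => fderiv ℝ Φ (t, q) (0, 0, 1) :=
      funext fun q => fderiv_slice_snd (hΦ.differentiable (by simp)) t q _
    rw [stationaryOp, hv, fderiv_slice_snd (hΦ.differentiable (by simp)),
      fderiv_slice_snd (hvΦ.differentiable (by simp))]
  have hYint : Integrable Y (volume.prod ν) := by
    refine Continuous.integrable_of_hasCompactSupport ?_ ?_
    · exact ((continuous_snd.comp continuous_snd).mul (contDiff_fderiv_apply hΦ _).continuous).add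
        (contDiff_fderiv_apply hvΦ _).continuous
    · exact (hΦc.fderiv_apply (𝕜 := ℝ) _).mul_left.add
        ((hΦc.fderiv_apply (𝕜 := ℝ) _).fderiv_apply (𝕜 := ℝ) _)
  have hslice : ∀ t, ∫ q, Y (t, q) ∂ν = 0 := fun t => by
    have hsub : tsupport (fun q => Φ (t, q)) ⊆ (fun q => kin R p (t, q)) ⁻¹' tsupport φ :=
      tsupport_comp_subset_preimage φ ((contDiff_kin R p).continuous.comp (by fun_prop))
    have hmem : ∀ q, kin R p (t, q) ∈ S → q ∈ K := fun q hq => by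
      simpa only [kinPoint_kin hR] using hS _ hq
    simp only [hY]
    refine hν _ (hΦ.comp (by fun_prop)) ?_ fun q hq => hmem q (hφS (hsub hq))
    exact HasCompactSupport.intro (hΦc.isCompact.image continuous_snd) fun q hq =>
      image_eq_zero_of_notMem_tsupport fun h => hq ⟨(t, q), h, rfl⟩
  have htime : ∫ z, fderiv ℝ Φ z (1, 0) ∂(volume.prod ν) = 0 := integral_fderiv_fst_eq_zero hΦ hΦc
  rw [integral_liftMeasure hR]
  simp only [kolmogorovOp_kin hR p hφ]
  rw [integral_add ((contDiff_fderiv_apply hΦ _).continuous.integrable_of_hasCompactSupport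
    (hΦc.fderiv_apply (𝕜 := ℝ) _)) (hYint.const_mul _), integral_const_mul, integral_prod _ hYint]
  simp only [hslice, integral_zero, mul_zero, add_zero]
  exact htime

end Lift

/-! ### Calculus of the Kolmogorov operator -/

lemma kolmogorovOp_eq_zero_of_eventuallyEq_const {φ : P3 → ℝ} {z : P3} {c : ℝ}
    (h : φ =ᶠ[𝓝 z] fun _ => c) : kolmogorovOp φ z = 0 := by
  have hv : (fun w => fderiv ℝ φ w (0, 0, 1)) =ᶠ[𝓝 z] fun _ => 0 := by
    filter_upwards [h.eventuallyEq_nhds] with w hw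
    rw [hw.fderiv_eq, fderiv_fun_const, Pi.zero_apply, _root_.zero_apply]
  rw [kolmogorovOp, h.fderiv_eq, hv.fderiv_eq]
  simp only [fderiv_fun_const, Pi.zero_apply, _root_.zero_apply, mul_zero, add_zero]

lemma kolmogorovOp_eq_zero_of_notMem_tsupport {φ : P3 → ℝ} {z : P3} (hz : z ∉ tsupport φ) :
    kolmogorovOp φ z = 0 :=
  kolmogorovOp_eq_zero_of_eventuallyEq_const (notMem_tsupport_iff_eventuallyEq.1 hz)

lemma hasCompactSupport_kolmogorovOp {φ : P3 → ℝ} (hφ : HasCompactSupport φ) :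
    HasCompactSupport (kolmogorovOp φ) :=
  HasCompactSupport.intro hφ fun _ => kolmogorovOp_eq_zero_of_notMem_tsupport

lemma continuous_kolmogorovOp {φ : P3 → ℝ} (hφ : ContDiff ℝ ∞ φ) :
    Continuous (kolmogorovOp φ) :=
  ((contDiff_fderiv_apply hφ _).continuous.add
    ((continuous_snd.comp continuous_snd).mul (contDiff_fderiv_apply hφ _).continuous)).add
    (contDiff_fderiv_apply (contDiff_fderiv_apply hφ _) _).continuous

lemma kolmogorovOp_mul {f g : P3 → ℝ} (hf : ContDiff ℝ ∞ f) (hg : ContDiff ℝ ∞ g) (z : P3) :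
    kolmogorovOp (fun z => f z * g z) z = f z * kolmogorovOp g z + g z * kolmogorovOp f z
      + 2 * (fderiv ℝ f z (0, 0, 1) * fderiv ℝ g z (0, 0, 1)) := by
  have df := hf.differentiable (by simp)
  have dg := hg.differentiable (by simp)
  have dfv := (contDiff_fderiv_apply hf (0, 0, 1)).differentiable (by simp)
  have dgv := (contDiff_fderiv_apply hg (0, 0, 1)).differentiable (by simp)
  have hprod : ∀ y w, fderiv ℝ (fun z => f z * g z) y w =
      f y * fderiv ℝ g y w + g y * fderiv ℝ f y w := fun y w => by
    rw [fderiv_fun_mul (df y) (dg y)]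
    rfl
  simp only [kolmogorovOp, hprod]
  rw [fderiv_fun_add ((df z).fun_mul (dgv z)) ((dg z).fun_mul (dfv z)),
    fderiv_fun_mul (df z) (dgv z), fderiv_fun_mul (dg z) (dfv z)]
  simp only [_root_.add_apply, _root_.smul_apply, smul_eq_mul]
  ring

lemma kolmogorovOp_comp {F : ℝ → ℝ} {U : P3 → ℝ} (hF : ContDiff ℝ ∞ F) (hU : ContDiff ℝ ∞ U)
    (z : P3) : kolmogorovOp (fun z => F (U z)) z = deriv F (U z) * kolmogorovOp U z
      + deriv (deriv F) (U z) * (fderiv ℝ U z (0, 0, 1)) ^ 2 := by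
  have dU := hU.differentiable (by simp)
  have dUv := (contDiff_fderiv_apply hU (0, 0, 1)).differentiable (by simp)
  have dF := hF.differentiable (by simp)
  have dF' : Differentiable ℝ (deriv F) :=
    (contDiff_infty_iff_deriv.1 hF).2.differentiable (by simp)
  have hchain : ∀ G : ℝ → ℝ, Differentiable ℝ G → ∀ y w,
      fderiv ℝ (fun z => G (U z)) y w = deriv G (U y) * fderiv ℝ U y w := fun G hG y w => by
    rw [show (fun z => G (U z)) = G ∘ U from rfl,
      ((hG (U y)).hasDerivAt.comp_hasFDerivAt y (dU y).hasFDerivAt).fderiv, _root_.smul_apply,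
      smul_eq_mul]
  simp only [kolmogorovOp, hchain F dF]
  have dFU : DifferentiableAt ℝ (fun w => deriv F (U w)) z := (dF' _).comp z (dU z)
  rw [fderiv_fun_mul dFU (dUv z)]
  simp only [_root_.add_apply, _root_.smul_apply, smul_eq_mul]
  rw [hchain _ dF']
  ring

section CoordinateLines

variable {f : P3 → ℝ} {z : P3} {d : ℝ}

lemma fderiv_apply_time (hf : DifferentiableAt ℝ f z)
    (hd : HasDerivAt (fun s => f (s, z.2)) d z.1) : fderiv ℝ f z (1, 0, 0) = d :=
  (HasFDerivAt.comp_hasDerivAt (l := f) z.1 hf.hasFDerivAt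
    ((hasDerivAt_id z.1).prodMk (hasDerivAt_const z.1 z.2))).unique hd

lemma fderiv_apply_space (hf : DifferentiableAt ℝ f z)
    (hd : HasDerivAt (fun s => f (z.1, s, z.2.2)) d z.2.1) : fderiv ℝ f z (0, 1, 0) = d :=
  (HasFDerivAt.comp_hasDerivAt (l := f) z.2.1 hf.hasFDerivAt ((hasDerivAt_const _ z.1).prodMk
    ((hasDerivAt_id _).prodMk (hasDerivAt_const _ z.2.2)))).unique hd

lemma fderiv_apply_velocity (hf : DifferentiableAt ℝ f z)
    (hd : HasDerivAt (fun s => f (z.1, z.2.1, s)) d z.2.2) : fderiv ℝ f z (0, 0, 1) = d :=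
  (HasFDerivAt.comp_hasDerivAt (l := f) z.2.2 hf.hasFDerivAt ((hasDerivAt_const _ z.1).prodMk
    ((hasDerivAt_const _ z.2.1).prodMk (hasDerivAt_id _)))).unique hd

end CoordinateLines

/-! ### The Kolmogorov kernel -/

/-- The exponent of the Kolmogorov kernel. -/
def kernelExponent (z : P3) : ℝ :=
  z.2.2 ^ 2 / z.1 - 3 * z.2.2 * z.2.1 / z.1 ^ 2 + 3 * z.2.1 ^ 2 / z.1 ^ 3

/-- The (unnormalised) fundamental solution of `kolmogorovOp` with pole at the origin; it is only
meaningful for `t < 0`. -/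
def kernel (z : P3) : ℝ := (z.1 ^ 2)⁻¹ * Real.exp (kernelExponent z)

/-- The `v`-derivative of the logarithm of `kernel`. -/
def kernelLogDeriv (z : P3) : ℝ := 2 * z.2.2 / z.1 - 3 * z.2.1 / z.1 ^ 2

/-- The kernel switched off smoothly in time: it is `kernel` for `t ≤ -2ε` and vanishes for
`t ≥ -ε`. -/
def cutKernel (ε : ℝ) (z : P3) : ℝ := Real.smoothTransition (-z.1 / ε - 1) * kernel z

/-- The source `-kolmogorovOp (cutKernel ε)`, an approximate point mass at the origin as
`ε → 0`. -/
def kernelSource (ε : ℝ) (z : P3) : ℝ :=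
  ε⁻¹ * deriv Real.smoothTransition (-z.1 / ε - 1) * kernel z

lemma contDiff_smoothTransition : ContDiff ℝ ∞ Real.smoothTransition :=
  Real.smoothTransition.contDiff (n := ⊤)

lemma continuous_deriv_smoothTransition : Continuous (deriv Real.smoothTransition) :=
  contDiff_smoothTransition.continuous_deriv (by simp)

lemma deriv_smoothTransition_of_nonpos {x : ℝ} (hx : x ≤ 0) :
    deriv Real.smoothTransition x = 0 :=
  IsLocalMin.deriv_eq_zero <| Eventually.of_forall fun y => by
    simp only [Real.smoothTransition.zero_of_nonpos hx, Real.smoothTransition.nonneg]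

lemma deriv_smoothTransition_of_one_le {x : ℝ} (hx : 1 ≤ x) :
    deriv Real.smoothTransition x = 0 :=
  IsLocalMax.deriv_eq_zero <| Eventually.of_forall fun y => by
    simp only [Real.smoothTransition.one_of_one_le hx, Real.smoothTransition.le_one]

lemma kernel_nonneg (z : P3) : 0 ≤ kernel z := by unfold kernel; positivity

lemma cutKernel_nonneg (ε : ℝ) (z : P3) : 0 ≤ cutKernel ε z :=
  mul_nonneg (Real.smoothTransition.nonneg _) (kernel_nonneg z)

lemma cutKernel_le_kernel (ε : ℝ) (z : P3) : cutKernel ε z ≤ kernel z :=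
  mul_le_of_le_one_left (kernel_nonneg z) (Real.smoothTransition.le_one _)

section Cutoff

variable {ε : ℝ} (hε : 0 < ε)
include hε

lemma kernelSource_nonneg (z : P3) : 0 ≤ kernelSource ε z :=
  mul_nonneg (mul_nonneg (inv_nonneg.2 hε.le) Real.smoothTransition.monotone.deriv_nonneg)
    (kernel_nonneg z)

lemma neg_div_sub_one_nonpos {t : ℝ} (ht : -ε ≤ t) : -t / ε - 1 ≤ 0 := by
  rw [sub_nonpos, div_le_one hε]; linarith

lemma cutKernel_of_neg_le {z : P3} (hz : -ε ≤ z.1) : cutKernel ε z = 0 := by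
  rw [cutKernel, Real.smoothTransition.zero_of_nonpos (neg_div_sub_one_nonpos hε hz), zero_mul]

lemma kernelSource_of_neg_le {z : P3} (hz : -ε ≤ z.1) : kernelSource ε z = 0 := by
  rw [kernelSource, deriv_smoothTransition_of_nonpos (neg_div_sub_one_nonpos hε hz), mul_zero,
    zero_mul]

lemma cutKernel_eventuallyEq_zero {z : P3} (hz : -ε < z.1) : cutKernel ε =ᶠ[𝓝 z] fun _ => 0 := by
  filter_upwards [continuous_fst.continuousAt.eventually (lt_mem_nhds hz)] with w hw
  exact cutKernel_of_neg_le hε hw.le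

lemma contDiff_cutKernel : ContDiff ℝ ∞ (cutKernel ε) := by
  refine contDiff_iff_contDiffAt.2 fun z => ?_
  by_cases hz : z.1 < 0
  · have hswitch : ContDiff ℝ ∞ fun z : P3 => -z.1 / ε - 1 := by
      simp only [div_eq_mul_inv]; fun_prop
    have hkernel : ContDiffAt ℝ ∞ kernel z := by
      have h1 := hz.ne
      have h2 : z.1 ^ 2 ≠ 0 := pow_ne_zero _ h1
      have h3 : z.1 ^ 3 ≠ 0 := pow_ne_zero _ h1
      unfold kernel kernelExponent
      fun_prop (disch := assumption)
    exact (contDiff_smoothTransition.comp hswitch).contDiffAt.mul hkernel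
  · exact contDiffAt_const.congr_of_eventuallyEq (cutKernel_eventuallyEq_zero hε (by linarith))

end Cutoff

lemma hasDerivAt_kernelExponent_velocity (t x v : ℝ) :
    HasDerivAt (fun s => kernelExponent (t, x, s)) (kernelLogDeriv (t, x, v)) v := by
  have h := ((((hasDerivAt_id v).pow 2).div_const t).sub
    ((((hasDerivAt_id v).const_mul 3).mul_const x).div_const (t ^ 2))).add_const
      (3 * x ^ 2 / t ^ 3)
  refine h.congr_deriv ?_
  simp [kernelLogDeriv]

lemma hasDerivAt_kernelExponent_space (t x v : ℝ) :
    HasDerivAt (fun s => kernelExponent (t, s, v)) (-3 * v / t ^ 2 + 6 * x / t ^ 3) x := by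
  have h := ((((hasDerivAt_id x).const_mul (3 * v)).div_const (t ^ 2)).const_sub (v ^ 2 / t)).add
    ((((hasDerivAt_id x).pow 2).const_mul 3).div_const (t ^ 3))
  refine h.congr_deriv ?_
  simp only [mul_one, Nat.cast_ofNat, id_eq, Nat.add_one_sub_one, pow_one, neg_mul]
  ring

lemma hasDerivAt_kernelExponent_time {t : ℝ} (ht : t ≠ 0) (x v : ℝ) :
    HasDerivAt (fun s => kernelExponent (s, x, v))
      (-v ^ 2 / t ^ 2 + 6 * v * x / t ^ 3 - 9 * x ^ 2 / t ^ 4) t := by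
  have h := (((hasDerivAt_const t (v ^ 2)).div (hasDerivAt_id t) ht).sub
    ((hasDerivAt_const t (3 * v * x)).div ((hasDerivAt_id t).pow 2) (pow_ne_zero 2 ht))).add
    ((hasDerivAt_const t (3 * x ^ 2)).div ((hasDerivAt_id t).pow 3) (pow_ne_zero 3 ht))
  refine h.congr_deriv ?_
  simp only [id_eq, zero_mul, mul_one, zero_sub, Pi.pow_apply, Nat.cast_ofNat,
    Nat.add_one_sub_one, pow_one]
  field_simp
  ring

lemma hasDerivAt_cutKernel_velocity (ε : ℝ) (z : P3) :
    HasDerivAt (fun s => cutKernel ε (z.1, z.2.1, s)) (cutKernel ε z * kernelLogDeriv z) z.2.2 := by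
  refine (((hasDerivAt_kernelExponent_velocity z.1 z.2.1 z.2.2).exp.const_mul
    ((z.1 ^ 2)⁻¹)).const_mul (Real.smoothTransition (-z.1 / ε - 1))).congr_deriv ?_
  simp only [cutKernel, kernel, Prod.mk.eta]
  ring

lemma hasDerivAt_cutKernel_space (ε : ℝ) (z : P3) :
    HasDerivAt (fun s => cutKernel ε (z.1, s, z.2.2))
      (cutKernel ε z * (-3 * z.2.2 / z.1 ^ 2 + 6 * z.2.1 / z.1 ^ 3)) z.2.1 := by
  refine (((hasDerivAt_kernelExponent_space z.1 z.2.1 z.2.2).exp.const_mul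
    ((z.1 ^ 2)⁻¹)).const_mul (Real.smoothTransition (-z.1 / ε - 1))).congr_deriv ?_
  simp only [cutKernel, kernel, Prod.mk.eta]
  ring

lemma hasDerivAt_cutKernel_time (ε : ℝ) {z : P3} (hz : z.1 ≠ 0) :
    HasDerivAt (fun s => cutKernel ε (s, z.2))
      (-kernelSource ε z + cutKernel ε z * (-2 / z.1 + (-z.2.2 ^ 2 / z.1 ^ 2
        + 6 * z.2.2 * z.2.1 / z.1 ^ 3 - 9 * z.2.1 ^ 2 / z.1 ^ 4))) z.1 := by
  have hswitch : HasDerivAt (fun s : ℝ => Real.smoothTransition (-s / ε - 1))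
      (deriv Real.smoothTransition (-z.1 / ε - 1) * (-1 / ε)) z.1 :=
    HasDerivAt.comp (h₂ := Real.smoothTransition) z.1
      (contDiff_smoothTransition.differentiable (by simp) _).hasDerivAt
      (((hasDerivAt_id z.1).neg.div_const ε).sub_const 1)
  have hkernel := (((hasDerivAt_id z.1).pow 2).inv (pow_ne_zero 2 hz)).mul
    (hasDerivAt_kernelExponent_time hz z.2.1 z.2.2).exp
  refine (hswitch.mul hkernel).congr_deriv ?_
  simp only [Prod.mk.eta, Pi.mul_apply, Pi.inv_apply, Pi.pow_apply, id_eq, Nat.cast_ofNat,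
    Nat.add_one_sub_one, pow_one, mul_one, kernelSource, kernel, cutKernel]
  field_simp

lemma hasDerivAt_kernelLogDeriv_velocity (z : P3) :
    HasDerivAt (fun s => kernelLogDeriv (z.1, z.2.1, s)) (2 / z.1) z.2.2 := by
  refine ((((hasDerivAt_id z.2.2).const_mul 2).div_const z.1).sub_const
    (3 * z.2.1 / z.1 ^ 2)).congr_deriv ?_
  rw [mul_one]

section CutKernelEquation

variable {ε : ℝ} (hε : 0 < ε)
include hε

lemma fderiv_cutKernel_velocity (z : P3) :
    fderiv ℝ (cutKernel ε) z (0, 0, 1) = cutKernel ε z * kernelLogDeriv z :=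
  fderiv_apply_velocity ((contDiff_cutKernel hε).differentiable (by simp) z)
    (hasDerivAt_cutKernel_velocity ε z)

lemma fderiv_fderiv_cutKernel_velocity (z : P3) :
    fderiv ℝ (fun w => fderiv ℝ (cutKernel ε) w (0, 0, 1)) z (0, 0, 1) =
      cutKernel ε z * (kernelLogDeriv z ^ 2 + 2 / z.1) := by
  refine fderiv_apply_velocity
    ((contDiff_fderiv_apply (contDiff_cutKernel hε) _).differentiable (by simp) z) ?_
  simp only [fderiv_cutKernel_velocity hε]
  refine ((hasDerivAt_cutKernel_velocity ε z).mul
    (hasDerivAt_kernelLogDeriv_velocity z)).congr_deriv ?_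
  simp only [Prod.mk.eta]
  ring

lemma kolmogorovOp_cutKernel (z : P3) : kolmogorovOp (cutKernel ε) z = -kernelSource ε z := by
  rcases lt_or_ge z.1 0 with hz | hz
  · have hdiff := (contDiff_cutKernel hε).differentiable (by simp) z
    rw [kolmogorovOp, fderiv_apply_time hdiff (hasDerivAt_cutKernel_time ε hz.ne),
      fderiv_apply_space hdiff (hasDerivAt_cutKernel_space ε z),
      fderiv_fderiv_cutKernel_velocity hε, kernelLogDeriv]
    have := hz.ne
    field_simp
    ring
  · rw [kolmogorovOp_eq_zero_of_eventuallyEq_const (cutKernel_eventuallyEq_zero hε (by linarith)),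
      kernelSource_of_neg_le hε (by linarith), neg_zero]

lemma continuous_kernelSource : Continuous (kernelSource ε) := by
  have hsource : kernelSource ε = fun z => -kolmogorovOp (cutKernel ε) z := by
    ext z
    rw [kolmogorovOp_cutKernel hε, neg_neg]
  rw [hsource]
  exact (continuous_kolmogorovOp (contDiff_cutKernel hε)).neg

end CutKernelEquation

/-! ### Kernel estimates -/

/-- The part of the cube of half-width `r` around the origin that lies in the past of the origin. -/
def pastCube (r : ℝ) : Set P3 := Icc (-r) 0 ×ˢ Icc (-r) r ×ˢ Icc (-r) r

lemma isCompact_pastCube (r : ℝ) : IsCompact (pastCube r) :=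
  isCompact_Icc.prod (isCompact_Icc.prod isCompact_Icc)

lemma mem_pastCube_iff {r : ℝ} {z : P3} : z ∈ pastCube r ↔ ‖z‖ ≤ r ∧ z.1 ≤ 0 := by
  simp only [pastCube, mem_prod, mem_Icc, Prod.norm_def, sup_le_iff, Real.norm_eq_abs, abs_le]
  constructor
  · rintro ⟨⟨h1, h2⟩, h3, h4⟩
    exact ⟨⟨⟨h1, by linarith [h3.1, h3.2]⟩, h3, h4⟩, h2⟩
  · rintro ⟨⟨⟨h1, -⟩, h3, h4⟩, h2⟩
    exact ⟨⟨h1, h2⟩, h3, h4⟩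

lemma pastCube_subset {r s : ℝ} (h : r ≤ s) : pastCube r ⊆ pastCube s := fun _ hz =>
  mem_pastCube_iff.2 ⟨(mem_pastCube_iff.1 hz).1.trans h, (mem_pastCube_iff.1 hz).2⟩

section KernelEstimates

variable {z : P3} (hz : z.1 < 0)
include hz

lemma velocity_sq_div_le_neg_kernelExponent :
    z.2.2 ^ 2 / (4 * -z.1) ≤ -kernelExponent z := by
  have hsquare : -kernelExponent z - z.2.2 ^ 2 / (4 * -z.1) =
      3 * (z.2.1 / z.1 - z.2.2 / 2) ^ 2 / (-z.1) := by
    have := hz.ne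
    unfold kernelExponent
    field_simp
    ring
  have : 0 ≤ 3 * (z.2.1 / z.1 - z.2.2 / 2) ^ 2 / (-z.1) :=
    div_nonneg (by positivity) (by linarith)
  linarith

lemma space_sq_div_le_neg_kernelExponent :
    3 * z.2.1 ^ 2 / (4 * (-z.1) ^ 3) ≤ -kernelExponent z := by
  have hsquare : -kernelExponent z - 3 * z.2.1 ^ 2 / (4 * (-z.1) ^ 3) =
      (z.2.2 - 3 * z.2.1 / (2 * z.1)) ^ 2 / (-z.1) := by
    have := hz.ne
    unfold kernelExponent
    field_simp
    ring
  have : 0 ≤ (z.2.2 - 3 * z.2.1 / (2 * z.1)) ^ 2 / (-z.1) :=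
    div_nonneg (by positivity) (by linarith)
  linarith

lemma neg_kernelExponent_nonneg : 0 ≤ -kernelExponent z :=
  (div_nonneg (sq_nonneg _) (by linarith)).trans (velocity_sq_div_le_neg_kernelExponent hz)

lemma norm_sq_div_le (hz1 : ‖z‖ ≤ 1) : ‖z‖ ^ 2 / (4 * -z.1) ≤ 1 / 4 - kernelExponent z := by
  have hτ : 0 < -z.1 := by linarith
  have hnonneg := neg_kernelExponent_nonneg hz
  have hτ1 : -z.1 ≤ 1 := by
    simpa only [Real.norm_eq_abs, abs_of_neg hz] using (norm_fst_le z).trans hz1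
  have hcases : ‖z‖ = |z.1| ∨ ‖z‖ = |z.2.1| ∨ ‖z‖ = |z.2.2| := by
    simp only [Prod.norm_def, Real.norm_eq_abs]
    grind
  rcases hcases with h | h | h <;> rw [h, sq_abs]
  · rw [show z.1 ^ 2 / (4 * -z.1) = -z.1 / 4 by field_simp]
    linarith
  · have hcube : (-z.1) ^ 3 ≤ -z.1 := pow_le_of_le_one hτ.le hτ1 (by norm_num)
    have : z.2.1 ^ 2 / (4 * -z.1) ≤ 3 * z.2.1 ^ 2 / (4 * (-z.1) ^ 3) := by
      gcongr
      linarith [sq_nonneg z.2.1]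
    linarith [space_sq_div_le_neg_kernelExponent hz]
  · linarith [velocity_sq_div_le_neg_kernelExponent hz]

lemma kernel_mul_one_add_abs_kernelLogDeriv_le (hz1 : ‖z‖ ≤ 1) :
    kernel z * (1 + |kernelLogDeriv z|) ≤ 6 * Real.exp (kernelExponent z) / z.1 ^ 4 := by
  have hnorm := hz1
  simp only [Prod.norm_def, sup_le_iff, Real.norm_eq_abs] at hnorm
  obtain ⟨ht, hx, hv⟩ := hnorm
  have hone : z.1 ^ 2 ≤ 1 := by rw [sq_le_one_iff_abs_le_one]; exact ht
  have hsq : 0 < z.1 ^ 2 := sq_pos_of_neg hz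
  have hlog : |kernelLogDeriv z| * z.1 ^ 2 ≤ 5 := by
    have heq : kernelLogDeriv z * z.1 ^ 2 = 2 * (z.2.2 * z.1) - 3 * z.2.1 := by
      have := hz.ne
      unfold kernelLogDeriv
      field_simp
    rw [← abs_of_pos hsq, ← abs_mul, heq]
    refine (abs_sub _ _).trans ?_
    rw [abs_mul, abs_mul, abs_mul, Nat.abs_ofNat, Nat.abs_ofNat]
    linarith [mul_le_one₀ hv (abs_nonneg _) ht]
  rw [kernel, show (z.1 ^ 2)⁻¹ * Real.exp (kernelExponent z) * (1 + |kernelLogDeriv z|) =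
    (z.1 ^ 2 + |kernelLogDeriv z| * z.1 ^ 2) * Real.exp (kernelExponent z) / z.1 ^ 4 by
      have := hz.ne
      field_simp]
  gcongr
  linarith

/-- The Gaussian factor beats the power of `t` in front of it. -/
lemma kernel_mul_one_add_abs_kernelLogDeriv_mul_norm_pow_le (hz1 : ‖z‖ ≤ 1) :
    kernel z * (1 + |kernelLogDeriv z|) * ‖z‖ ^ 8 ≤ 36864 * Real.exp (1 / 4) := by
  set y := ‖z‖ ^ 2 / (4 * -z.1) with hy
  have hτ : 0 < -z.1 := by linarith
  have hy0 : 0 ≤ y := by positivity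
  have hexp : Real.exp (kernelExponent z) * Real.exp y ≤ Real.exp (1 / 4) := by
    rw [← Real.exp_add, Real.exp_le_exp]
    linarith [norm_sq_div_le hz hz1]
  have hpow : y ^ 4 ≤ 24 * Real.exp y := by
    have := Real.pow_div_factorial_le_exp y hy0 4
    rw [div_le_iff₀ (by positivity)] at this
    norm_num [Nat.factorial] at this
    linarith
  calc kernel z * (1 + |kernelLogDeriv z|) * ‖z‖ ^ 8
      ≤ 6 * Real.exp (kernelExponent z) / z.1 ^ 4 * ‖z‖ ^ 8 := by
        gcongr
        exact kernel_mul_one_add_abs_kernelLogDeriv_le hz hz1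
    _ = 1536 * (Real.exp (kernelExponent z) * y ^ 4) := by
        have := hz.ne
        rw [hy]
        field_simp
        ring
    _ ≤ 1536 * (Real.exp (kernelExponent z) * (24 * Real.exp y)) := by gcongr
    _ = 36864 * (Real.exp (kernelExponent z) * Real.exp y) := by ring
    _ ≤ 36864 * Real.exp (1 / 4) := by gcongr

/-- A large value of the kernel forces both `-t` and `t * kernelExponent` to be small, and the
latter controls `x` and `v`. -/
lemma mem_pastCube_of_lt_kernel {r : ℝ} (hr : 0 < r) (hr1 : r ≤ 1) (hk : 64 / r ^ 4 < kernel z) :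
    z ∈ pastCube r := by
  set τ := -z.1 with hτ_def
  set q := -kernelExponent z with hq
  have hτ : 0 < τ := by linarith
  have hq0 : 0 ≤ q := neg_kernelExponent_nonneg hz
  have hexp : (1 + q / 2) ^ 2 ≤ Real.exp q := by
    calc (1 + q / 2) ^ 2 ≤ Real.exp (q / 2) ^ 2 := by
          gcongr
          linarith [Real.add_one_le_exp (q / 2)]
      _ = Real.exp q := by rw [← Real.exp_nat_mul]; congr 1; push_cast; ring
  have hinv : τ ^ 2 * Real.exp q < (r ^ 2 / 8) ^ 2 := by
    rw [kernel, show kernelExponent z = -q by ring, Real.exp_neg, ← mul_inv,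
      lt_inv_comm₀ (by positivity) (by have := hz.ne; positivity), inv_div,
      show z.1 ^ 2 = τ ^ 2 by ring] at hk
    linarith
  have hsmall : τ * (1 + q / 2) < r ^ 2 / 8 := by
    refine lt_of_pow_lt_pow_left₀ 2 (by positivity) ?_
    calc (τ * (1 + q / 2)) ^ 2 = τ ^ 2 * (1 + q / 2) ^ 2 := by ring
      _ ≤ τ ^ 2 * Real.exp q := by gcongr
      _ < (r ^ 2 / 8) ^ 2 := hinv
  have hr2 : r ^ 2 ≤ r := pow_le_of_le_one hr.le hr1 two_ne_zero
  have hτq0 : 0 ≤ τ * q := by positivity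
  have : τ ≤ r := by linarith
  have hτq : 4 * (τ * q) ≤ r ^ 2 := by linarith
  have hv : z.2.2 ^ 2 ≤ r ^ 2 := by
    have := velocity_sq_div_le_neg_kernelExponent hz
    rw [div_le_iff₀ (by positivity)] at this
    linarith
  have hx : z.2.1 ^ 2 ≤ r ^ 2 := by
    have h := space_sq_div_le_neg_kernelExponent hz
    rw [div_le_iff₀ (by positivity)] at h
    have : 4 * (τ * q) * τ ^ 2 ≤ r ^ 2 * 1 := by
      gcongr
      exact pow_le_one₀ hτ.le (by linarith)
    linarith [sq_nonneg z.2.1]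
  exact ⟨⟨by linarith, hz.le⟩, abs_le_of_sq_le_sq' hx hr.le, abs_le_of_sq_le_sq' hv hr.le⟩

end KernelEstimates

/-! ### Upper bound at the pole -/

lemma commutator_le {ε : ℝ} (hε : 0 < ε) (χ : P3 → ℝ) (z : P3) :
    cutKernel ε z * kolmogorovOp χ z
      + 2 * (fderiv ℝ χ z (0, 0, 1) * fderiv ℝ (cutKernel ε) z (0, 0, 1)) ≤
      cutKernel ε z * (1 + |kernelLogDeriv z|)
        * (|kolmogorovOp χ z| + 2 * |fderiv ℝ χ z (0, 0, 1)|) := by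
  rw [fderiv_cutKernel_velocity hε]
  have hk := cutKernel_nonneg ε z
  have hop := mul_le_mul_of_nonneg_left (le_abs_self (kolmogorovOp χ z)) hk
  have hgradient := mul_le_mul_of_nonneg_left
    ((le_abs_self _).trans_eq (abs_mul (fderiv ℝ χ z (0, 0, 1)) (kernelLogDeriv z))) hk
  have : 0 ≤ cutKernel ε z * (|kernelLogDeriv z| * |kolmogorovOp χ z|) := by positivity
  have : 0 ≤ cutKernel ε z * |fderiv ℝ χ z (0, 0, 1)| := by positivity
  linarith

section Upper

variable {χ : P3 → ℝ} (hχ : ContDiff ℝ ∞ χ) {r : ℝ} (hr : r ≤ 1)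
  (hχr : tsupport χ ⊆ Metric.closedBall 0 r) (hχ1 : χ =ᶠ[𝓝 0] fun _ => 1)
include hχ hr hχr hχ1

/-- The commutator lives where the cutoff varies, away from the pole, and the kernel is bounded
there uniformly in `ε`. -/
lemma exists_commutator_le : ∃ C, 0 ≤ C ∧ ∀ ε > 0, ∀ z,
    cutKernel ε z * kolmogorovOp χ z
      + 2 * (fderiv ℝ χ z (0, 0, 1) * fderiv ℝ (cutKernel ε) z (0, 0, 1)) ≤
      (pastCube r).indicator (fun _ => C) z := by
  have hχc : HasCompactSupport χ := HasCompactSupport.of_support_subset_isCompact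
    (isCompact_closedBall 0 r) ((subset_tsupport χ).trans hχr)
  obtain ⟨ρ, hρ, hball⟩ := Metric.eventually_nhds_iff.1 hχ1.eventuallyEq_nhds
  set D : P3 → ℝ := fun z => |kolmogorovOp χ z| + 2 * |fderiv ℝ χ z (0, 0, 1)|
  have hDzero : ∀ {z : P3} {c : ℝ}, χ =ᶠ[𝓝 z] (fun _ => c) → D z = 0 := fun {z c} h => by
    simp only [D, kolmogorovOp_eq_zero_of_eventuallyEq_const h, h.fderiv_eq, fderiv_fun_const,
      Pi.zero_apply, _root_.zero_apply, abs_zero, mul_zero, add_zero]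
  obtain ⟨B, hB⟩ : ∃ B, ∀ z, ‖D z‖ ≤ B :=
    (HasCompactSupport.intro hχc fun z hz =>
      hDzero (notMem_tsupport_iff_eventuallyEq.1 hz)).exists_bound_of_continuous
      ((continuous_kolmogorovOp hχ).abs.add
        (continuous_const.mul (contDiff_fderiv_apply hχ _).continuous.abs))
  have hD0 : ∀ z, 0 ≤ D z := fun z => by positivity
  have hDB : ∀ z, D z ≤ B := fun z => (Real.le_norm_self _).trans (hB z)
  have hB0 : 0 ≤ B := (hD0 0).trans (hDB 0)
  set A := 36864 * Real.exp (1 / 4) / ρ ^ 8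
  refine ⟨A * B, by positivity, fun ε hε z => ?_⟩
  have hindicator : 0 ≤ (pastCube r).indicator (fun _ => A * B) z :=
    indicator_nonneg (fun _ _ => by positivity) z
  refine (commutator_le hε χ z).trans ?_
  change _ * D z ≤ _
  rcases le_or_gt 0 z.1 with ht | ht
  · rwa [cutKernel_of_neg_le hε (by linarith), zero_mul, zero_mul]
  by_cases hz : z ∈ tsupport χ
  swap
  · rwa [hDzero (notMem_tsupport_iff_eventuallyEq.1 hz), mul_zero]
  rcases lt_or_ge (dist z 0) ρ with hzρ | hzρ
  · rwa [hDzero (hball hzρ), mul_zero]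
  have hzr : ‖z‖ ≤ r := mem_closedBall_zero_iff.1 (hχr hz)
  rw [dist_zero_right] at hzρ
  rw [indicator_of_mem (mem_pastCube_iff.2 ⟨hzr, ht.le⟩)]
  have hkernel : cutKernel ε z * (1 + |kernelLogDeriv z|) ≤ A := by
    rw [le_div_iff₀ (by positivity)]
    refine le_trans ?_ (kernel_mul_one_add_abs_kernelLogDeriv_mul_norm_pow_le ht (hzr.trans hr))
    have := kernel_nonneg z
    gcongr
    exact cutKernel_le_kernel ε z
  exact mul_le_mul hkernel (hDB z) (hD0 z) (by positivity)

lemma exists_integral_kernelSource_le : ∃ C, 0 ≤ C ∧ ∀ μ : Measure P3,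
    IsFiniteMeasureOnCompacts μ → IsKolmogorovSol (pastCube r) μ → ∀ ε > 0,
      ∫ z, χ z * kernelSource ε z ∂μ ≤ C * μ.real (pastCube r) := by
  obtain ⟨C, hC, hcomm⟩ := exists_commutator_le hχ hr hχr hχ1
  have hχc : HasCompactSupport χ := HasCompactSupport.of_support_subset_isCompact
    (isCompact_closedBall 0 r) ((subset_tsupport χ).trans hχr)
  refine ⟨C, hC, fun μ _ hμ ε hε => ?_⟩
  set φ : P3 → ℝ := fun z => χ z * cutKernel ε z
  have hφ : ContDiff ℝ ∞ φ := hχ.mul (contDiff_cutKernel hε)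
  have hφc : HasCompactSupport φ := hχc.mul_right
  have hφS : tsupport φ ⊆ pastCube r := by
    refine closure_minimal (fun z hz => mem_pastCube_iff.2 ⟨?_, ?_⟩) (isCompact_pastCube r).isClosed
    · exact mem_closedBall_zero_iff.1 (hχr (subset_tsupport χ (left_ne_zero_of_mul hz)))
    · by_contra! ht
      exact right_ne_zero_of_mul hz (cutKernel_of_neg_le hε (by linarith))
  have hpoint : ∀ z, χ z * kernelSource ε z ≤
      (pastCube r).indicator (fun _ => C) z - kolmogorovOp φ z := fun z => by
    rw [kolmogorovOp_mul hχ (contDiff_cutKernel hε), kolmogorovOp_cutKernel hε]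
    linarith [hcomm ε hε z]
  have hcube : MeasurableSet (pastCube r) := (isCompact_pastCube r).measurableSet
  have hint1 : Integrable ((pastCube r).indicator fun _ => C) μ :=
    (integrable_indicator_iff hcube).2 (integrableOn_const (isCompact_pastCube r).measure_lt_top.ne)
  have hint2 : Integrable (kolmogorovOp φ) μ :=
    (continuous_kolmogorovOp hφ).integrable_of_hasCompactSupport
      (hasCompactSupport_kolmogorovOp hφc)
  calc ∫ z, χ z * kernelSource ε z ∂μ
      ≤ ∫ z, ((pastCube r).indicator (fun _ => C) z - kolmogorovOp φ z) ∂μ :=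
        integral_mono ((hχ.continuous.mul
          (continuous_kernelSource hε)).integrable_of_hasCompactSupport hχc.mul_right)
          (hint1.sub hint2) hpoint
    _ = C * μ.real (pastCube r) := by
        rw [integral_sub hint1 hint2, hμ φ hφ hφc hφS, sub_zero, integral_indicator_const _ hcube,
          smul_eq_mul, mul_comm]

end Upper

/-! ### Lower bound at the pole -/

/-- A smooth convex nondecreasing function that vanishes for `u ≤ M` and has slope `1` for
`u ≥ 2M`, where `M > 0`. -/
def convexCut (M u : ℝ) : ℝ := ∫ s in (0 : ℝ)..u, Real.smoothTransition ((s - M) / M)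

section ConvexCut

variable (M : ℝ)

lemma deriv_convexCut : deriv (convexCut M) = fun u => Real.smoothTransition ((u - M) / M) := by
  have hcont : Continuous fun s : ℝ => Real.smoothTransition ((s - M) / M) :=
    Real.smoothTransition.continuous.comp (by fun_prop)
  exact funext fun u => hcont.deriv_integral _ 0 u

lemma contDiff_convexCut : ContDiff ℝ ∞ (convexCut M) := by
  have hcont : Continuous fun s : ℝ => Real.smoothTransition ((s - M) / M) :=
    Real.smoothTransition.continuous.comp (by fun_prop)
  refine contDiff_infty_iff_deriv.2
    ⟨intervalIntegral.differentiable_integral_of_continuous hcont, ?_⟩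
  rw [deriv_convexCut]
  refine contDiff_smoothTransition.comp ?_
  simp only [div_eq_mul_inv]
  fun_prop

variable {M} (hM : 0 < M)
include hM

lemma deriv_deriv_convexCut_nonneg (u : ℝ) : 0 ≤ deriv (deriv (convexCut M)) u := by
  rw [deriv_convexCut]
  exact Monotone.deriv_nonneg fun a b hab => Real.smoothTransition.monotone (by gcongr)

lemma deriv_convexCut_of_le {u : ℝ} (hu : u ≤ M) : deriv (convexCut M) u = 0 := by
  rw [deriv_convexCut]
  exact Real.smoothTransition.zero_of_nonpos
    (div_nonpos_of_nonpos_of_nonneg (sub_nonpos.2 hu) hM.le)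

lemma deriv_convexCut_of_two_mul_le {u : ℝ} (hu : 2 * M ≤ u) : deriv (convexCut M) u = 1 := by
  rw [deriv_convexCut]
  refine Real.smoothTransition.one_of_one_le ?_
  rw [le_div_iff₀ hM]
  linarith

lemma convexCut_of_le {u : ℝ} (hu : u ≤ M) : convexCut M u = 0 := by
  rw [convexCut, intervalIntegral.integral_congr (g := fun _ => 0), intervalIntegral.integral_zero]
  intro s hs
  have hsM : s ≤ M := hs.2.trans (max_le hM.le hu)
  exact Real.smoothTransition.zero_of_nonpos
    (div_nonpos_of_nonpos_of_nonneg (sub_nonpos.2 hsM) hM.le)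

end ConvexCut

/-- The box, at time distance about `2⁻¹⁰` before the pole, over which the average of a solution is
controlled by its value at the pole. -/
def earlierBox : Set P3 :=
  Icc (-(3 / 2 ^ 11)) (-(1 / 2 ^ 11)) ×ˢ Icc (-(1 / 2 ^ 20)) (1 / 2 ^ 20)
    ×ˢ Icc (-(1 / 2 ^ 20)) (1 / 2 ^ 20)

lemma isCompact_earlierBox : IsCompact earlierBox :=
  isCompact_Icc.prod (isCompact_Icc.prod isCompact_Icc)

lemma neg_one_eighth_le_kernelExponent {z : P3} (hz : z ∈ earlierBox) :
    -(1 / 8) ≤ kernelExponent z := by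
  obtain ⟨⟨ht1, ht2⟩, hx, hv⟩ := hz
  norm_num at ht1 ht2
  set τ := -z.1
  have hτ : 1 / 2048 ≤ τ := by linarith
  have hτ1 : τ ≤ 1 := by linarith
  have hτ0 : 0 < τ := by linarith
  have hx2 : z.2.1 ^ 2 ≤ (1 / 2 ^ 20) ^ 2 := sq_le_sq' hx.1 hx.2
  have hv2 : z.2.2 ^ 2 ≤ (1 / 2 ^ 20) ^ 2 := sq_le_sq' hv.1 hv.2
  have hcube : (1 / 2048) ^ 3 ≤ τ ^ 3 := by gcongr
  have hexp : -kernelExponent z =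
      (z.2.2 ^ 2 * τ ^ 2 + 3 * (z.2.2 * z.2.1 * τ) + 3 * z.2.1 ^ 2) / τ ^ 3 := by
    have : z.1 = -τ := by ring
    rw [kernelExponent, this]
    field_simp
    ring
  have hvτ : z.2.2 ^ 2 * τ ^ 2 ≤ z.2.2 ^ 2 :=
    mul_le_of_le_one_right (sq_nonneg _) (pow_le_one₀ hτ0.le hτ1)
  have hvx : z.2.2 * z.2.1 * τ ≤ (z.2.2 ^ 2 + z.2.1 ^ 2) / 2 := by
    have hmean : z.2.2 * z.2.1 ≤ (z.2.2 ^ 2 + z.2.1 ^ 2) / 2 := by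
      linarith [two_mul_le_add_sq z.2.2 z.2.1]
    exact (mul_le_mul_of_nonneg_right hmean hτ0.le).trans
      (mul_le_of_le_one_right (by positivity) hτ1)
  have : -kernelExponent z ≤ 1 / 8 := by
    rw [hexp, div_le_iff₀ (by positivity)]
    norm_num at hx2 hv2 hcube
    linarith
  linarith

lemma le_kernel_of_mem_earlierBox {z : P3} (hz : z ∈ earlierBox) : 2 ^ 20 / 5 ≤ kernel z := by
  have hexp : 7 / 8 ≤ Real.exp (kernelExponent z) := by
    linarith [Real.add_one_le_exp (kernelExponent z), neg_one_eighth_le_kernelExponent hz]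
  have hpow : 2 ^ 22 / 9 ≤ (z.1 ^ 2)⁻¹ := by
    have hneg : z.1 < 0 := hz.1.2.trans_lt (by norm_num)
    have hsq : z.1 ^ 2 ≤ (3 / 2 ^ 11) ^ 2 := sq_le_sq' hz.1.1 (hneg.le.trans (by norm_num))
    rw [le_inv_comm₀ (by norm_num) (sq_pos_of_neg hneg)]
    exact hsq.trans_eq (by norm_num)
  calc (2 : ℝ) ^ 20 / 5 ≤ 2 ^ 22 / 9 * (7 / 8) := by norm_num
    _ ≤ kernel z := by unfold kernel; gcongr

/-- The kernel with a time weight that makes it a strict subsolution away from the pole. -/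
def weightedKernel (ε : ℝ) (z : P3) : ℝ := (2 + z.1) * cutKernel ε z

section WeightedKernel

variable {ε : ℝ} (hε : 0 < ε)
include hε

lemma contDiff_weightedKernel : ContDiff ℝ ∞ (weightedKernel ε) :=
  (contDiff_const.add contDiff_fst).mul (contDiff_cutKernel hε)

lemma kolmogorovOp_weightedKernel (z : P3) :
    kolmogorovOp (weightedKernel ε) z = cutKernel ε z - (2 + z.1) * kernelSource ε z := by
  have hfderiv : ∀ z w : P3, fderiv ℝ (fun z : P3 => 2 + z.1) z w = w.1 := fun z w => by
    rw [fderiv_const_add, fderiv_fst, ContinuousLinearMap.coe_fst']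
  have htime : kolmogorovOp (fun z : P3 => 2 + z.1) z = 1 := by
    simp only [kolmogorovOp, hfderiv, fderiv_fun_const, Pi.zero_apply, _root_.zero_apply, mul_zero,
      add_zero]
  rw [show weightedKernel ε = fun z => (2 + z.1) * cutKernel ε z from rfl,
    kolmogorovOp_mul (contDiff_const.add contDiff_fst) (contDiff_cutKernel hε),
    kolmogorovOp_cutKernel hε, htime, hfderiv]
  ring

lemma mem_pastCube_of_lt_weightedKernel {z : P3} (hz : 2 ^ 17 < weightedKernel ε z) :
    z ∈ pastCube (1 / 4) := by
  have hpos : 0 < weightedKernel ε z := lt_trans (by norm_num) hz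
  have ht : z.1 < 0 := by
    by_contra! ht
    rw [weightedKernel, cutKernel_of_neg_le hε (by linarith), mul_zero] at hpos
    exact hpos.false
  refine mem_pastCube_of_lt_kernel ht (by norm_num) (by norm_num) ?_
  have hle : weightedKernel ε z ≤ 2 * kernel z :=
    mul_le_mul (by linarith) (cutKernel_le_kernel ε z) (cutKernel_nonneg ε z) zero_le_two
  norm_num at hz ⊢
  linarith

lemma kolmogorovOp_convexCut_weightedKernel_ge (z : P3) :
    deriv (convexCut (2 ^ 17)) (weightedKernel ε z)
        * (cutKernel ε z - (2 + z.1) * kernelSource ε z) ≤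
      kolmogorovOp (fun z => convexCut (2 ^ 17) (weightedKernel ε z)) z := by
  rw [kolmogorovOp_comp (contDiff_convexCut _) (contDiff_weightedKernel hε),
    kolmogorovOp_weightedKernel hε]
  have := deriv_deriv_convexCut_nonneg (M := 2 ^ 17) (by norm_num) (weightedKernel ε z)
  exact le_add_of_nonneg_right (by positivity)

lemma tsupport_convexCut_weightedKernel_subset :
    tsupport (fun z => convexCut (2 ^ 17) (weightedKernel ε z)) ⊆ pastCube (1 / 4) := by
  refine closure_minimal (fun z hz => ?_) (isCompact_pastCube _).isClosed
  by_contra hnot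
  exact hz (convexCut_of_le (by norm_num)
    (not_lt.1 fun h => hnot (mem_pastCube_of_lt_weightedKernel hε h)))

variable (hε' : ε ≤ 1 / 2 ^ 12)
include hε'

lemma cutKernel_eq_kernel_of_mem_earlierBox {z : P3} (hz : z ∈ earlierBox) :
    cutKernel ε z = kernel z := by
  have ht := hz.1.2
  rw [cutKernel, Real.smoothTransition.one_of_one_le, one_mul]
  rw [le_sub_iff_add_le, le_div_iff₀ hε]
  norm_num at ht hε' ⊢
  linarith

lemma le_weightedKernel_of_mem_earlierBox {z : P3} (hz : z ∈ earlierBox) :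
    2 * 2 ^ 17 ≤ weightedKernel ε z := by
  have hk := le_kernel_of_mem_earlierBox hz
  have ht : 3 / 2 ≤ 2 + z.1 := by linarith [hz.1.1]
  rw [weightedKernel, cutKernel_eq_kernel_of_mem_earlierBox hε hε' hz]
  calc (2 : ℝ) * 2 ^ 17 ≤ 3 / 2 * (2 ^ 20 / 5) := by norm_num
    _ ≤ (2 + z.1) * kernel z := by gcongr

lemma indicator_earlierBox_le (z : P3) :
    earlierBox.indicator (fun _ => (1 : ℝ)) z ≤
      (pastCube (1 / 4)).indicator (fun z => 2 * kernelSource ε z) z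
        + kolmogorovOp (fun z => convexCut (2 ^ 17) (weightedKernel ε z)) z := by
  have hη := kernelSource_nonneg hε z
  have hlower := kolmogorovOp_convexCut_weightedKernel_ge hε z
  by_cases hzB : z ∈ earlierBox
  · have hU := le_weightedKernel_of_mem_earlierBox hε hε' hzB
    rw [deriv_convexCut_of_two_mul_le (by norm_num) hU,
      cutKernel_eq_kernel_of_mem_earlierBox hε hε' hzB] at hlower
    rw [indicator_of_mem hzB,
      indicator_of_mem (mem_pastCube_of_lt_weightedKernel hε (lt_of_lt_of_le (by norm_num) hU))]
    have hk := le_kernel_of_mem_earlierBox hzB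
    have ht : z.1 ≤ 0 := hzB.1.2.trans (by norm_num)
    have := mul_nonpos_of_nonpos_of_nonneg ht hη
    norm_num at hk
    linarith
  rw [indicator_of_notMem hzB]
  rcases le_or_gt (weightedKernel ε z) (2 ^ 17) with hU | hU
  · rw [deriv_convexCut_of_le (by norm_num) hU, zero_mul] at hlower
    exact add_nonneg (indicator_nonneg
      (fun w _ => mul_nonneg zero_le_two (kernelSource_nonneg hε w)) z) hlower
  · have hz := mem_pastCube_of_lt_weightedKernel hε hU
    rw [indicator_of_mem hz]
    set d := deriv (convexCut (2 ^ 17)) (weightedKernel ε z) with hd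
    have hd0 : 0 ≤ d := by
      rw [hd, deriv_convexCut]; exact Real.smoothTransition.nonneg _
    have hd1 : d ≤ 1 := by
      rw [hd, deriv_convexCut]; exact Real.smoothTransition.le_one _
    have hsource : d * ((2 + z.1) * kernelSource ε z) ≤ 1 * (2 * kernelSource ε z) := by
      have : 0 ≤ 2 + z.1 := by linarith [hz.1.1]
      gcongr
      linarith [hz.1.2]
    linarith [mul_nonneg hd0 (cutKernel_nonneg ε z)]

/-- Tested against the equation is a convex function of `weightedKernel ε`, chosen so that only the
part of the kernel above the level `2 ^ 17` survives, which lives in `pastCube (1 / 4)`. -/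
lemma measureReal_earlierBox_le {μ : Measure P3} [IsFiniteMeasureOnCompacts μ]
    (hμ : IsKolmogorovSol (pastCube (1 / 4)) μ) {χ : P3 → ℝ} (hχ : Continuous χ)
    (hχc : HasCompactSupport χ) (hχ0 : ∀ z, 0 ≤ χ z) (hχ1 : ∀ z ∈ pastCube (1 / 4), 1 ≤ χ z) :
    μ.real earlierBox ≤ 2 * ∫ z, χ z * kernelSource ε z ∂μ := by
  set φ : P3 → ℝ := fun z => convexCut (2 ^ 17) (weightedKernel ε z)
  have hφ : ContDiff ℝ ∞ φ := (contDiff_convexCut _).comp (contDiff_weightedKernel hε)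
  have hφS : tsupport φ ⊆ pastCube (1 / 4) := tsupport_convexCut_weightedKernel_subset hε
  have hφc : HasCompactSupport φ := (isCompact_pastCube _).of_isClosed_subset
    (isClosed_tsupport φ) hφS
  have hbox : MeasurableSet earlierBox := isCompact_earlierBox.measurableSet
  have hint1 : Integrable (fun z => 2 * (χ z * kernelSource ε z)) μ :=
    ((hχ.mul (continuous_kernelSource hε)).integrable_of_hasCompactSupport
      hχc.mul_right).const_mul 2
  have hint2 : Integrable (kolmogorovOp φ) μ :=
    (continuous_kolmogorovOp hφ).integrable_of_hasCompactSupport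
      (hasCompactSupport_kolmogorovOp hφc)
  have hpoint : ∀ z, earlierBox.indicator (fun _ => (1 : ℝ)) z ≤
      2 * (χ z * kernelSource ε z) + kolmogorovOp φ z := fun z => by
    refine (indicator_earlierBox_le hε hε' z).trans (add_le_add_left ?_ _)
    refine indicator_le' (g := fun z => 2 * (χ z * kernelSource ε z)) (fun w hw => ?_)
      (fun w _ => ?_) z
    · have := le_mul_of_one_le_left (kernelSource_nonneg hε w) (hχ1 w hw)
      linarith
    · have := mul_nonneg (hχ0 w) (kernelSource_nonneg hε w)
      linarith
  calc μ.real earlierBox = ∫ z, earlierBox.indicator (fun _ => (1 : ℝ)) z ∂μ := by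
        rw [integral_indicator_const _ hbox, smul_eq_mul, mul_one]
    _ ≤ ∫ z, (2 * (χ z * kernelSource ε z) + kolmogorovOp φ z) ∂μ :=
        integral_mono ((integrable_indicator_iff hbox).2
          (integrableOn_const isCompact_earlierBox.measure_lt_top.ne)) (hint1.add hint2) hpoint
    _ = 2 * ∫ z, χ z * kernelSource ε z ∂μ := by
        rw [integral_add hint1 hint2, hμ φ hφ hφc hφS, add_zero, integral_const_mul]

end WeightedKernel

/-! ### Comparison of the two averages -/

/-- The Galilean group law expressing a change of centre in kinetic coordinates. -/
def galileanMul (a y : P3) : P3 :=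
  (a.1 + y.1, a.2.1 + a.2.2 * y.1 + y.2.1, a.2.2 + y.2.2)

lemma kinPoint_kinPoint (R : ℝ) (o : P2) (a y : P3) :
    kinPoint R (kinPoint R o a) y = kinPoint R o (galileanMul a y) := by
  ext <;> simp only [kinPoint, galileanMul] <;> ring

/-- The kinetic cylinder of radius `θ` ending at time `-s`. -/
def kinCylinder (θ s : ℝ) : Set P3 :=
  Ioc (-θ ^ 2 - s) (-s) ×ˢ Ioo (-θ ^ 3) (θ ^ 3) ×ˢ Ioo (-θ) θ

/-- The lift is constant in time, so it only matters which physical points two sets of kinetic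
coordinates describe. -/
lemma liftMeasure_le_liftMeasure {R : ℝ} (hR : R ≠ 0) {ν : Measure P2} [SFinite ν] {p p' : P2}
    {A B : Set P3} (hA : MeasurableSet A) (hB : MeasurableSet B) (s : ℝ)
    (hAB : ∀ y ∈ A, ∃ y' ∈ B, y'.1 = y.1 + s ∧ kinPoint R p' y' = kinPoint R p y) :
    liftMeasure R ν p A ≤ liftMeasure R ν p' B := by
  have hshift : MeasurePreserving (Prod.map (· + s) id) (volume.prod ν) (volume.prod ν) :=
    (measurePreserving_add_right volume s).prod (MeasurePreserving.id ν)
  have hmeas : ∀ q, Measurable (kin R q) := fun q => (kinHomeo hR q).continuous.measurable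
  rw [liftMeasure, liftMeasure, Measure.map_apply (hmeas p) hA, Measure.map_apply (hmeas p') hB,
    ← hshift.measure_preimage (hmeas p' hB).nullMeasurableSet]
  refine measure_mono fun z hz => ?_
  obtain ⟨y', hy'B, htime, hpoint⟩ := hAB _ hz
  have hz' : Prod.map (· + s) id z = (y'.1, kinPoint R p' y') := by
    rw [htime, hpoint, kinPoint_kin hR]
    rfl
  rwa [mem_preimage, mem_preimage, hz', kin_kinPoint hR]

lemma exists_mem_earlierBox_of_mem_pastCube {a b : P3}
    (ha : a ∈ kinCylinder (1 / 2 ^ 24) (1 / 2 ^ 10))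
    (hb : b ∈ kinCylinder (1 / 2 ^ 24) 0) {y : P3} (hy : y ∈ pastCube (1 / 2 ^ 24)) :
    ∃ y' ∈ earlierBox, y'.1 = y.1 + (a.1 - b.1) ∧ galileanMul b y' = galileanMul a y := by
  set t := y.1 + (a.1 - b.1) with ht
  refine ⟨(t, a.2.1 - b.2.1 + a.2.2 * y.1 - b.2.2 * t + y.2.1, a.2.2 - b.2.2 + y.2.2), ?_, rfl, ?_⟩
  swap
  · ext <;> simp only [galileanMul, ht] <;> ring
  obtain ⟨⟨ha1, ha2⟩, ⟨ha3, ha4⟩, ha5, ha6⟩ := ha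
  obtain ⟨⟨hb1, hb2⟩, ⟨hb3, hb4⟩, hb5, hb6⟩ := hb
  obtain ⟨⟨hy1, hy2⟩, ⟨hy3, hy4⟩, hy5, hy6⟩ := hy
  have hdrift : ∀ {v s : ℝ}, -(1 / 2 ^ 24) < v → v < 1 / 2 ^ 24 → |s| ≤ 1 →
      |v * s| ≤ 1 / 2 ^ 24 := fun {v s} h1 h2 hs => by
    rw [abs_mul]
    exact (mul_le_of_le_one_right (abs_nonneg v) hs).trans (abs_le.2 ⟨h1.le, h2.le⟩)
  have ht1 : |t| ≤ 1 := by
    rw [abs_le]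
    norm_num at *
    constructor <;> linarith
  have hy1' : |y.1| ≤ 1 := by
    rw [abs_le]
    norm_num at *
    constructor <;> linarith
  obtain ⟨hdrift1, hdrift2⟩ := abs_le.1 (hdrift ha5 ha6 hy1')
  obtain ⟨hdrift3, hdrift4⟩ := abs_le.1 (hdrift hb5 hb6 ht1)
  refine ⟨⟨?_, ?_⟩, ⟨?_, ?_⟩, ?_, ?_⟩ <;> norm_num at * <;> linarith

lemma liftMeasure_pastCube_le_earlierBox {R : ℝ} (hR : R ≠ 0) {ν : Measure P2} [SFinite ν] (o : P2)
    {a b : P3} (ha : a ∈ kinCylinder (1 / 2 ^ 24) (1 / 2 ^ 10))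
    (hb : b ∈ kinCylinder (1 / 2 ^ 24) 0) :
    liftMeasure R ν (kinPoint R o a) (pastCube (1 / 2 ^ 24)) ≤
      liftMeasure R ν (kinPoint R o b) earlierBox := by
  refine liftMeasure_le_liftMeasure hR (isCompact_pastCube _).measurableSet
    isCompact_earlierBox.measurableSet (a.1 - b.1) fun y hy => ?_
  obtain ⟨y', hy', htime, hpoint⟩ := exists_mem_earlierBox_of_mem_pastCube ha hb hy
  exact ⟨y', hy', htime, by rw [kinPoint_kinPoint, kinPoint_kinPoint, hpoint]⟩

lemma galileanMul_mem_pastCube {θ s : ℝ} (hθ : θ ≤ 1 / 4) (hs : 0 ≤ s) (hs' : s ≤ 1 / 4)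
    {a y : P3} (ha : a ∈ kinCylinder θ s) (hy : y ∈ pastCube (1 / 4)) :
    galileanMul a y ∈ pastCube (3 / 4) := by
  obtain ⟨⟨ha1, ha2⟩, ⟨ha3, ha4⟩, ha5, ha6⟩ := ha
  obtain ⟨⟨hy1, hy2⟩, ⟨hy3, hy4⟩, hy5, hy6⟩ := hy
  have hθ0 : 0 ≤ θ := by linarith
  have hθ2 : θ ^ 2 ≤ 1 / 4 := (pow_le_of_le_one hθ0 (by linarith) two_ne_zero).trans hθ
  have hθ3 : θ ^ 3 ≤ 1 / 4 := (pow_le_of_le_one hθ0 (by linarith) three_ne_zero).trans hθ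
  obtain ⟨hdrift1, hdrift2⟩ : -(1 / 4) ≤ a.2.2 * y.1 ∧ a.2.2 * y.1 ≤ 1 / 4 := by
    rw [← abs_le, abs_mul]
    have h1 : |a.2.2| ≤ 1 / 4 := abs_le.2 ⟨by linarith, by linarith⟩
    have h2 : |y.1| ≤ 1 := abs_le.2 ⟨by linarith, by linarith⟩
    exact (mul_le_of_le_one_right (abs_nonneg _) h2).trans h1
  refine ⟨⟨?_, ?_⟩, ⟨?_, ?_⟩, ?_, ?_⟩ <;> simp only [galileanMul] <;> linarith

lemma Aslant_prod_eq_image_kinCylinder {R : ℝ} (hR : 0 < R) (θ x₀ v₀ s : ℝ) :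
    Aslant θ R x₀ v₀ s ×ˢ Ioo (v₀ - θ * R) (v₀ + θ * R) =
      kinPoint R (x₀, v₀) '' kinCylinder θ s := by
  ext ⟨x, v⟩
  simp only [mem_prod, mem_image, Prod.exists, kinPoint, Prod.mk.injEq, kinCylinder]
  constructor
  · rintro ⟨⟨t, ⟨ht1, ht2⟩, hx⟩, hv1, hv2⟩
    obtain ⟨hx1, hx2⟩ := abs_lt.1 hx
    refine ⟨t / R ^ 2 - s, (x - x₀ - v₀ * (t - R ^ 2 * s)) / R ^ 3, (v - v₀) / R,
      ⟨⟨?_, ?_⟩, ⟨?_, ?_⟩, ?_, ?_⟩, ?_, ?_⟩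
    · have : -θ ^ 2 < t / R ^ 2 := by rw [lt_div_iff₀ (by positivity)]; linarith
      linarith
    · have : t / R ^ 2 ≤ 0 := div_nonpos_of_nonpos_of_nonneg ht2 (sq_nonneg R)
      linarith
    · rw [lt_div_iff₀ (by positivity)]; linarith
    · rw [div_lt_iff₀ (by positivity)]; linarith
    · rw [lt_div_iff₀ hR]; linarith
    · rw [div_lt_iff₀ hR]; linarith
    · field_simp; ring
    · field_simp; ring
  · rintro ⟨t, y, w, ⟨⟨ht1, ht2⟩, ⟨hy1, hy2⟩, hw1, hw2⟩, rfl, rfl⟩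
    have hR2 : 0 < R ^ 2 := by positivity
    have hR3 : 0 < R ^ 3 := by positivity
    refine ⟨⟨R ^ 2 * (t + s), ⟨?_, ?_⟩, ?_⟩, ?_, ?_⟩
    · have := mul_lt_mul_of_pos_left (show -θ ^ 2 < t + s by linarith) hR2
      linarith
    · exact mul_nonpos_of_nonneg_of_nonpos hR2.le (by linarith)
    · have heq : x₀ + R ^ 2 * v₀ * t + R ^ 3 * y - x₀ - v₀ * (R ^ 2 * (t + s) - R ^ 2 * s) =
        R ^ 3 * y := by ring
      rw [heq, abs_mul, abs_of_pos hR3, mul_pow, mul_comm]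
      exact mul_lt_mul_of_pos_right (abs_lt.2 ⟨hy1, hy2⟩) hR3
    · linarith [mul_lt_mul_of_pos_left hw1 hR]
    · linarith [mul_lt_mul_of_pos_left hw2 hR]

lemma isOpen_Aslant (θ R x₀ v₀ s : ℝ) : IsOpen (Aslant θ R x₀ v₀ s) := by
  have hunion : Aslant θ R x₀ v₀ s = ⋃ t ∈ Ioc (-(θ * R) ^ 2) 0,
      {x | |x - x₀ - v₀ * (t - R ^ 2 * s)| < (θ * R) ^ 3} := by
    ext x
    simp only [Aslant, mem_ofPred_eq, mem_iUnion, exists_prop]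
  rw [hunion]
  exact isOpen_biUnion fun t _ => isOpen_lt (by fun_prop) continuous_const

lemma pastCube_subset_kinCylinder : pastCube (3 / 4) ⊆ kinCylinder 1 0 := by
  rintro z ⟨⟨h1, h2⟩, ⟨h3, h4⟩, h5, h6⟩
  exact ⟨⟨by linarith, by linarith⟩, ⟨by linarith, by linarith⟩, by linarith, by linarith⟩

/-! ### The source of the kernel as an approximate identity -/

/-- The kinetic dilation of ratio `l`, for which `kolmogorovOp` is homogeneous. -/
def kinDilation (l : ℝ) (y : P3) : P3 := (l ^ 2 * y.1, l ^ 3 * y.2.1, l * y.2.2)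

/-- The centre with respect to which `q` has kinetic coordinates `y` of scale `R`. -/
def kinCentre (R : ℝ) (q : P2) (y : P3) : P2 :=
  (q.1 - R ^ 2 * (q.2 - R * y.2.2) * y.1 - R ^ 3 * y.2.1, q.2 - R * y.2.2)

lemma kinPoint_kinCentre (R : ℝ) (q : P2) (y : P3) : kinPoint R (kinCentre R q y) y = q := by
  ext <;> simp only [kinPoint, kinCentre] <;> ring

lemma tendsto_kinDilation (y : P3) : Tendsto (fun l => kinDilation l y) (𝓝 0) (𝓝 0) := by
  have hcont : Continuous fun l => kinDilation l y := by unfold kinDilation; fun_prop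
  have hzero : kinDilation 0 y = 0 := by ext <;> simp [kinDilation]
  exact hzero ▸ hcont.tendsto 0

lemma continuous_kinCentre (R : ℝ) : Continuous fun z : P2 × P3 => kinCentre R z.1 z.2 := by
  unfold kinCentre; fun_prop

lemma kinCentre_zero (R : ℝ) (q : P2) : kinCentre R q 0 = q := by
  ext <;> simp [kinCentre]

section ChangeOfVariables

lemma map_diagonal_volume {a b c : ℝ} (ha : 0 < a) (hb : 0 < b) (hc : 0 < c) :
    (volume : Measure P3).map (Prod.map (a * ·) (Prod.map (b * ·) (c * ·))) =
      ENNReal.ofReal (a * b * c)⁻¹ • volume := by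
  have hmeas : ∀ d : ℝ, Measurable (d * ·) := fun d => measurable_const_mul d
  rw [Measure.volume_eq_prod ℝ (ℝ × ℝ),
    ← Measure.map_prod_map _ _ (hmeas a) ((hmeas b).prodMap (hmeas c)),
    Measure.volume_eq_prod ℝ ℝ, ← Measure.map_prod_map _ _ (hmeas b) (hmeas c),
    Real.map_volume_mul_left ha.ne', Real.map_volume_mul_left hb.ne',
    Real.map_volume_mul_left hc.ne', Measure.prod_smul_left, Measure.prod_smul_left,
    Measure.prod_smul_right, Measure.prod_smul_right, Measure.prod_smul_right, smul_smul,
    smul_smul, abs_of_pos (inv_pos.2 ha), abs_of_pos (inv_pos.2 hb), abs_of_pos (inv_pos.2 hc),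
    mul_inv, mul_inv, ENNReal.ofReal_mul (by positivity), ENNReal.ofReal_mul (by positivity)]

lemma measurePreserving_sub_prodMk {f : ℝ → ℝ} (hf : Measurable f) (c : ℝ) :
    MeasurePreserving (fun p : P2 => ((f p.2 - p.1, c - p.2) : P2)) := by
  have hskew : MeasurePreserving (fun p : P2 => ((c - p.1, f p.1 - p.2) : P2)) volume volume :=
    (Measure.measurePreserving_sub_left volume c).skew_product (g := fun v x => f v - x)
      ((hf.comp measurable_fst).sub measurable_snd)
      (Eventually.of_forall fun v => (Measure.measurePreserving_sub_left volume (f v)).map_eq)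
  exact Measure.measurePreserving_swap.comp (hskew.comp Measure.measurePreserving_swap)

lemma measurePreserving_galileanReflection (a : ℝ) (q : P2) :
    MeasurePreserving fun y : P3 =>
      ((y.1, q.1 - a * (q.2 - y.2.2) * y.1 - y.2.1, q.2 - y.2.2) : P3) :=
  (MeasurePreserving.id volume).skew_product
    (g := fun (t : ℝ) (w : P2) => ((q.1 - a * (q.2 - w.2) * t - w.1, q.2 - w.2) : P2))
    (by unfold Function.uncurry; fun_prop)
    (Eventually.of_forall fun t => (measurePreserving_sub_prodMk
      (f := fun v => q.1 - a * (q.2 - v) * t) (by fun_prop) q.2).map_eq)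

lemma integral_comp_kinCentre_kinDilation {R l : ℝ} (hR : 0 < R) (hl : 0 < l) (q : P2) {F : P3 → ℝ}
    (hF : Continuous F) :
    ∫ z, F z = R ^ 4 * l ^ 6 * ∫ y : P3, F (l ^ 2 * y.1, kinCentre R q (kinDilation l y)) := by
  set S : P3 → P3 := Prod.map (l ^ 2 * ·) (Prod.map (R ^ 3 * l ^ 3 * ·) (R * l * ·))
  have hS : Measurable S := by fun_prop
  have hreflect := measurePreserving_galileanReflection (R ^ 2) q
  have hfactor : ∀ y : P3, ((l ^ 2 * y.1, kinCentre R q (kinDilation l y)) : P3) =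
      ((S y).1, q.1 - R ^ 2 * (q.2 - (S y).2.2) * (S y).1 - (S y).2.1, q.2 - (S y).2.2) := by
    intro y
    ext <;> simp only [S, kinCentre, kinDilation, Prod.map] <;> ring
  have hmap := integral_map (μ := (volume : Measure P3)) hS.aemeasurable
    (hF.comp (g := F) (f := fun y : P3 =>
      ((y.1, q.1 - R ^ 2 * (q.2 - y.2.2) * y.1 - y.2.1, q.2 - y.2.2) : P3))
      (by fun_prop)).aestronglyMeasurable
  rw [map_diagonal_volume (by positivity) (by positivity) (by positivity), integral_smul_measure,
    ENNReal.toReal_ofReal (by positivity), smul_eq_mul,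
    inv_mul_eq_iff_eq_mul₀ (by positivity)] at hmap
  have hcomp := integral_map (μ := (volume : Measure P3)) hreflect.measurable.aemeasurable
    (f := F) hF.aestronglyMeasurable
  rw [hreflect.map_eq] at hcomp
  simp only [hfactor]
  rw [hcomp]
  refine hmap.trans ?_
  congr 1
  ring

end ChangeOfVariables

lemma kernelSource_kinDilation {l : ℝ} (hl : 0 < l) (y : P3) :
    kernelSource (l ^ 2) (kinDilation l y) = (l ^ 6)⁻¹ * kernelSource 1 y := by
  have hl' := hl.ne'
  rcases eq_or_ne y.1 0 with hy | hy
  · simp [kernelSource, kernel, kinDilation, hy]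
  have htime : -(l ^ 2 * y.1) / l ^ 2 - 1 = -y.1 / 1 - 1 := by field_simp
  have hexponent : kernelExponent (kinDilation l y) = kernelExponent y := by
    unfold kernelExponent kinDilation
    field_simp
  rw [kernelSource, kernel, hexponent, kinDilation, htime, kernelSource, kernel]
  field_simp

lemma kernelSource_one_le {C : ℝ} (hC : ∀ x, deriv Real.smoothTransition x ≤ C) (z : P3) :
    kernelSource 1 z ≤ (Icc (-2 : ℝ) (-1)).indicator (fun _ => C) z.1 *
      (Real.exp (-(3 / 64) * z.2.1 ^ 2) * Real.exp (-(1 / 16) * z.2.2 ^ 2)) := by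
  by_cases hz : z.1 ∈ Icc (-2 : ℝ) (-1)
  · obtain ⟨hz1, hz2⟩ := hz
    have hneg : z.1 < 0 := by linarith
    have hv : z.2.2 ^ 2 / 8 ≤ z.2.2 ^ 2 / (4 * -z.1) := by gcongr <;> linarith
    have hx : 3 * z.2.1 ^ 2 / 32 ≤ 3 * z.2.1 ^ 2 / (4 * (-z.1) ^ 3) := by
      have hcube : (-z.1) ^ 3 ≤ 2 ^ 3 := pow_le_pow_left₀ (by linarith) (by linarith) 3
      have : 0 < (-z.1) ^ 3 := pow_pos (by linarith) 3
      gcongr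
      linarith
    have hkernel : kernel z ≤
        Real.exp (-(3 / 64) * z.2.1 ^ 2) * Real.exp (-(1 / 16) * z.2.2 ^ 2) := by
      rw [← Real.exp_add]
      refine (mul_le_of_le_one_left (Real.exp_nonneg _) (inv_le_one_of_one_le₀ ?_)).trans
        (Real.exp_le_exp.2 ?_)
      · rw [← neg_sq]
        exact one_le_pow₀ (by linarith)
      · linarith [velocity_sq_div_le_neg_kernelExponent hneg,
          space_sq_div_le_neg_kernelExponent hneg]
    rw [indicator_of_mem (mem_Icc.2 ⟨hz1, hz2⟩), kernelSource, inv_one, one_mul]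
    exact mul_le_mul (hC _) hkernel (kernel_nonneg z)
      (Real.smoothTransition.monotone.deriv_nonneg.trans (hC 0))
  · rw [indicator_of_notMem hz, zero_mul]
    rcases lt_or_ge (-1) z.1 with h | h
    · exact (kernelSource_of_neg_le one_pos h.le).le
    · have hle : 1 ≤ -z.1 / 1 - 1 := by
        by_contra! hlt
        exact hz ⟨by linarith, h⟩
      rw [kernelSource, deriv_smoothTransition_of_one_le hle, mul_zero, zero_mul]

lemma integrable_kernelSource_one : Integrable (kernelSource 1) := by
  have hcomp : HasCompactSupport (deriv Real.smoothTransition) :=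
    HasCompactSupport.intro (isCompact_Icc (a := (0 : ℝ)) (b := 1)) fun x hx => by
      rcases lt_or_ge x 0 with h | h
      · exact deriv_smoothTransition_of_nonpos h.le
      · exact deriv_smoothTransition_of_one_le (not_le.1 fun h' => hx ⟨h, h'⟩).le
  obtain ⟨C, hC⟩ := hcomp.exists_bound_of_continuous continuous_deriv_smoothTransition
  have hgauss : Integrable fun z : P3 => (Icc (-2 : ℝ) (-1)).indicator (fun _ => C) z.1 *
      (Real.exp (-(3 / 64) * z.2.1 ^ 2) * Real.exp (-(1 / 16) * z.2.2 ^ 2)) :=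
    ((integrable_indicator_iff measurableSet_Icc).2 (integrableOn_const (by simp))).mul_prod <|
      (integrable_exp_neg_mul_sq (by norm_num)).mul_prod (integrable_exp_neg_mul_sq (by norm_num))
  refine hgauss.mono' (continuous_kernelSource one_pos).aestronglyMeasurable
    (Eventually.of_forall fun z => ?_)
  rw [Real.norm_of_nonneg (kernelSource_nonneg one_pos z)]
  exact kernelSource_one_le (fun x => (le_abs_self _).trans (hC x)) z

lemma integral_kernelSource_one_pos : 0 < ∫ z, kernelSource 1 z := by
  have : (volume : Measure (ℝ × ℝ)).IsAddHaarMeasure := Measure.prod.instIsAddHaarMeasure _ _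
  have : (volume : Measure P3).IsAddHaarMeasure := Measure.prod.instIsAddHaarMeasure _ _
  rw [integral_pos_iff_support_of_nonneg (kernelSource_nonneg one_pos) integrable_kernelSource_one]
  refine (continuous_kernelSource one_pos).isOpen_support.measure_pos _ ?_
  obtain ⟨x, hx⟩ : ∃ x, deriv Real.smoothTransition x ≠ 0 := by
    by_contra! hconst
    have hdiff := contDiff_smoothTransition.differentiable (by simp)
    have := is_const_of_deriv_eq_zero hdiff hconst 0 1
    simp at this
  have hx0 : 0 < x := not_le.1 fun h => hx (deriv_smoothTransition_of_nonpos h)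
  have htime : -(-(x + 1)) / 1 - 1 = x := by ring
  refine ⟨(-(x + 1), 0, 0), ?_⟩
  rw [Function.mem_support, kernelSource, htime, inv_one, one_mul, kernel]
  exact mul_ne_zero hx (mul_ne_zero (inv_ne_zero (pow_ne_zero 2 (neg_ne_zero.2 (by positivity))))
    (Real.exp_ne_zero _))

section ApproximateIdentity

variable {R : ℝ} {ν : Measure P2} {w : P2 → ℝ} {χ : P3 → ℝ}

lemma integral_mul_kernelSource_kin (hR : 0 < R) (hw : Continuous w) (hχ : Continuous χ)
    {l : ℝ} (hl : 0 < l) (q : P2) :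
    ∫ z : P3, w z.2 * (χ (kin R z.2 (z.1, q)) * kernelSource (l ^ 2) (kin R z.2 (z.1, q))) =
      R ^ 4 *
        ∫ y, w (kinCentre R q (kinDilation l y)) * χ (kinDilation l y) * kernelSource 1 y := by
  have hsource := continuous_kernelSource (pow_pos hl 2)
  have hkin : Continuous fun z : P3 => kin R z.2 (z.1, q) := by unfold kin; fun_prop
  have hcoord : ∀ y, kin R (kinCentre R q (kinDilation l y)) (l ^ 2 * y.1, q) = kinDilation l y :=
    fun y => by
      have := kin_kinPoint hR.ne' (kinCentre R q (kinDilation l y)) (kinDilation l y)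
      rwa [kinPoint_kinCentre] at this
  have hcontinuous : Continuous fun z : P3 =>
    w z.2 * (χ (kin R z.2 (z.1, q)) * kernelSource (l ^ 2) (kin R z.2 (z.1, q))) := by fun_prop
  rw [integral_comp_kinCentre_kinDilation hR hl q hcontinuous, mul_assoc,
    ← integral_const_mul (l ^ 6)]
  congr 2 with y
  rw [hcoord, kernelSource_kinDilation hl]
  field_simp

lemma hasCompactSupport_mul_comp_kin (hR : R ≠ 0) (hwc : HasCompactSupport w) {g : P3 → ℝ}
    (hgc : HasCompactSupport g) :
    HasCompactSupport fun x : P2 × P3 => w x.1 * g (kin R x.1 x.2) := by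
  have hpoint : Continuous fun x : P2 × P3 => (x.1, x.2.1, kinPoint R x.1 x.2) := by
    unfold kinPoint; fun_prop
  refine HasCompactSupport.intro ((hwc.isCompact.prod hgc.isCompact).image hpoint) fun x hx => ?_
  by_cases hxw : x.1 ∈ tsupport w
  · have hxg : kin R x.1 x.2 ∉ tsupport g := fun h =>
      hx ⟨(x.1, kin R x.1 x.2), ⟨hxw, h⟩, Prod.ext rfl (Prod.ext rfl (kinPoint_kin hR x.1 x.2))⟩
    rw [image_eq_zero_of_notMem_tsupport hxg, mul_zero]
  · rw [image_eq_zero_of_notMem_tsupport hxw, zero_mul]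

lemma continuous_mul_comp_kin (R : ℝ) (hw : Continuous w) {g : P3 → ℝ} (hg : Continuous g) :
    Continuous fun x : P2 × P3 => w x.1 * g (kin R x.1 x.2) := by
  unfold kin
  fun_prop

lemma integrable_mul_comp_kin [SFinite ν] [IsFiniteMeasureOnCompacts ν] (hR : R ≠ 0)
    (hw : Continuous w) (hwc : HasCompactSupport w) {g : P3 → ℝ} (hg : Continuous g)
    (hgc : HasCompactSupport g) :
    Integrable (fun x : P2 × P3 => w x.1 * g (kin R x.1 x.2)) (volume.prod (volume.prod ν)) :=
  (continuous_mul_comp_kin R hw hg).integrable_of_hasCompactSupport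
    (hasCompactSupport_mul_comp_kin hR hwc hgc)

lemma integrable_mul_integral_liftMeasure [SFinite ν] [IsFiniteMeasureOnCompacts ν] (hR : R ≠ 0)
    (hw : Continuous w) (hwc : HasCompactSupport w) {g : P3 → ℝ} (hg : Continuous g)
    (hgc : HasCompactSupport g) :
    Integrable fun p => w p * ∫ y, g y ∂liftMeasure R ν p := by
  simp only [integral_liftMeasure hR, ← integral_const_mul]
  exact (integrable_mul_comp_kin hR hw hwc hg hgc).integral_prod_left

lemma integral_mul_integral_kernelSource_liftMeasure [SFinite ν] [IsFiniteMeasureOnCompacts ν]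
    (hR : 0 < R) (hw : Continuous w) (hwc : HasCompactSupport w) (hχ : Continuous χ)
    (hχc : HasCompactSupport χ) {l : ℝ} (hl : 0 < l) :
    ∫ p, w p * ∫ y, χ y * kernelSource (l ^ 2) y ∂liftMeasure R ν p =
      R ^ 4 * ∫ q, ∫ y, w (kinCentre R q (kinDilation l y)) * χ (kinDilation l y) *
        kernelSource 1 y ∂volume ∂ν := by
  have hg : Continuous fun y => χ y * kernelSource (l ^ 2) y :=
    hχ.mul (continuous_kernelSource (pow_pos hl 2))
  let G : P2 × P3 → ℝ := fun x =>
    w x.1 * (χ (kin R x.1 x.2) * kernelSource (l ^ 2) (kin R x.1 x.2))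
  have hG : Continuous G := continuous_mul_comp_kin R hw hg
  have hGc : HasCompactSupport G := hasCompactSupport_mul_comp_kin hR.ne' hwc hχc.mul_right
  have hint : Integrable G (volume.prod (volume.prod ν)) :=
    hG.integrable_of_hasCompactSupport hGc
  have hslice : ∀ q, Integrable fun z : P3 => G (z.2, z.1, q) := fun q =>
    (hG.comp (by fun_prop)).integrable_of_hasCompactSupport <|
      HasCompactSupport.intro (hGc.isCompact.image (f := fun x => (x.2.1, x.1)) (by fun_prop))
        fun z hz => image_eq_zero_of_notMem_tsupport (f := G) (x := (z.2, z.1, q)) fun h =>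
          hz ⟨_, h, rfl⟩
  simp only [integral_liftMeasure hR.ne', ← integral_const_mul]
  rw [integral_integral_swap hint, integral_prod_symm _ hint.integral_prod_right]
  refine integral_congr_ae (Eventually.of_forall fun q => ?_)
  simp only [integral_const_mul]
  rw [← integral_mul_kernelSource_kin hR hw hχ hl q, Measure.volume_eq_prod ℝ P2,
    integral_prod _ (hslice q)]

lemma tendsto_integral_mul_integral_kernelSource [IsFiniteMeasure ν] (hR : 0 < R)
    (hw : Continuous w) (hwc : HasCompactSupport w) (hχ : Continuous χ)
    (hχc : HasCompactSupport χ) :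
    Tendsto (fun l => ∫ p, w p * ∫ y, χ y * kernelSource (l ^ 2) y ∂liftMeasure R ν p) (𝓝[>] 0)
      (𝓝 (R ^ 4 * ((∫ q, w q ∂ν) * (χ 0 * ∫ y, kernelSource 1 y)))) := by
  obtain ⟨A, hA⟩ := hwc.exists_bound_of_continuous hw
  obtain ⟨B, hB⟩ := hχc.exists_bound_of_continuous hχ
  set F : ℝ → P2 × P3 → ℝ := fun l x =>
    w (kinCentre R x.1 (kinDilation l x.2)) * χ (kinDilation l x.2) * kernelSource 1 x.2
  have hFcont : ∀ l, Continuous (F l) := fun l => by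
    have := continuous_kernelSource one_pos
    have hdil : Continuous (kinDilation l) := by unfold kinDilation; fun_prop
    have hcentre : Continuous fun x : P2 × P3 => kinCentre R x.1 (kinDilation l x.2) := by
      unfold kinCentre; fun_prop
    fun_prop
  have hbound : ∀ l x, ‖F l x‖ ≤ A * B * kernelSource 1 x.2 := fun l x => by
    rw [norm_mul, norm_mul, Real.norm_of_nonneg (kernelSource_nonneg one_pos _)]
    have hA0 : 0 ≤ A := (norm_nonneg _).trans (hA 0)
    gcongr
    exacts [kernelSource_nonneg one_pos _, hA _, hB _]
  have hbound_int : Integrable (fun x : P2 × P3 => A * B * kernelSource 1 x.2) (ν.prod volume) :=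
    (integrable_kernelSource_one.comp_snd ν).const_mul (A * B)
  have hlim : ∀ x, Tendsto (F · x) (𝓝[>] 0) (𝓝 (w x.1 * (χ 0 * kernelSource 1 x.2))) := fun x => by
    have hdil : Tendsto (kinDilation · x.2) (𝓝[>] 0) (𝓝 0) :=
      (tendsto_kinDilation x.2).mono_left nhdsWithin_le_nhds
    have hcentre := ((continuous_kinCentre R).comp
      (Continuous.prodMk_right x.1)).tendsto 0 |>.comp hdil
    simp only [Function.comp_def, kinCentre_zero] at hcentre
    rw [← mul_assoc]
    exact (((hw.tendsto x.1).comp hcentre).mul ((hχ.tendsto 0).comp hdil)).mul_const _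
  have hdct := (tendsto_integral_filter_of_dominated_convergence _
    (Eventually.of_forall fun l => (hFcont l).aestronglyMeasurable)
    (Eventually.of_forall fun l => Eventually.of_forall (hbound l)) hbound_int
    (Eventually.of_forall hlim)).const_mul (R ^ 4)
  rw [integral_prod_mul w fun y => χ 0 * kernelSource 1 y, integral_const_mul] at hdct
  refine hdct.congr' (eventually_mem_nhdsWithin.mono fun l hl => ?_)
  refine Eq.trans ?_ (integral_mul_integral_kernelSource_liftMeasure hR hw hwc hχ hχc hl).symm
  rw [integral_prod]
  exact hbound_int.mono' (hFcont l).aestronglyMeasurable (Eventually.of_forall (hbound l))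

end ApproximateIdentity

/-! ### From averages to pointwise values -/

/-- Weights on `U`: the nonnegative test functions against which averages over `U` are taken. -/
structure IsWeight {E : Type*} [TopologicalSpace E] (U : Set E) (w : E → ℝ) : Prop where
  continuous : Continuous w
  hasCompactSupport : HasCompactSupport w
  nonneg : ∀ p, 0 ≤ w p
  mem_of_ne_zero : ∀ p, w p ≠ 0 → p ∈ U

lemma integral_mul_integral_le {X Y : Type*} [MeasurableSpace X] [MeasurableSpace Y]
    {μ : Measure X} {ν : Measure Y} [SFinite μ] [SFinite ν] {w a : X → ℝ} {w' b : Y → ℝ} {c : ℝ}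
    (hw0 : ∀ p, 0 ≤ w p) (hw0' : ∀ q, 0 ≤ w' q) (hw : Integrable w μ) (hw' : Integrable w' ν)
    (hwa : Integrable (fun p => w p * a p) μ) (hwb : Integrable (fun q => w' q * b q) ν)
    (hab : ∀ p q, w p ≠ 0 → w' q ≠ 0 → a p ≤ c * b q) :
    (∫ p, w p * a p ∂μ) * ∫ q, w' q ∂ν ≤ c * ((∫ p, w p ∂μ) * ∫ q, w' q * b q ∂ν) := by
  rw [← integral_prod_mul, ← integral_prod_mul, ← integral_const_mul]
  refine integral_mono (hwa.mul_prod hw') ((hw.mul_prod hwb).const_mul c) fun z => ?_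
  by_cases hz : w z.1 = 0 ∨ w' z.2 = 0
  · rcases hz with hz | hz <;> simp [hz]
  · obtain ⟨h1, h2⟩ := not_or.1 hz
    calc w z.1 * a z.1 * w' z.2 = w z.1 * w' z.2 * a z.1 := by ring
      _ ≤ w z.1 * w' z.2 * (c * b z.2) :=
        mul_le_mul_of_nonneg_left (hab _ _ h1 h2) (mul_nonneg (hw0 _) (hw0' _))
      _ = c * (w z.1 * (w' z.2 * b z.2)) := by ring

section Differentiation

variable {E : Type*} [NormedAddCommGroup E] [NormedSpace ℝ E] [FiniteDimensional ℝ E]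
  [MeasurableSpace E] [BorelSpace E] {μ : Measure E} [μ.IsAddHaarMeasure] {h : E → ℝ}

lemma isWeight_normed_sub (φ : ContDiffBump (0 : E)) {U : Set E} {p : E}
    (hU : Metric.ball p φ.rOut ⊆ U) : IsWeight U fun q => φ.normed μ (p - q) where
  continuous := φ.continuous_normed.comp (by fun_prop)
  hasCompactSupport := φ.hasCompactSupport_normed.comp_homeomorph (Homeomorph.subLeft p)
  nonneg _ := φ.nonneg_normed _
  mem_of_ne_zero q hq := hU <| by
    have hmem : p - q ∈ Function.support (φ.normed μ) := hq
    rwa [φ.support_normed_eq, mem_ball_zero_iff, ← dist_eq_norm, dist_comm] at hmem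

lemma ae_exists_isWeight_tendsto (hh : LocallyIntegrable h μ) :
    ∀ᵐ p ∂μ, ∃ w : ℕ → E → ℝ, (∀ n, ∫ q, w n q ∂μ = 1) ∧
      Tendsto (fun n => ∫ q, w n q * h q ∂μ) atTop (𝓝 (h p)) ∧
      ∀ U, IsOpen U → p ∈ U → ∀ᶠ n in atTop, IsWeight U (w n) := by
  let φ : ℕ → ContDiffBump (0 : E) := fun n =>
    ⟨1 / ((n : ℝ) + 1), 2 * (1 / ((n : ℝ) + 1)), by positivity,
      lt_mul_of_one_lt_left (by positivity) one_lt_two⟩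
  have hout : Tendsto (fun n => (φ n).rOut) atTop (𝓝 0) := by
    simpa only [mul_zero] using (tendsto_one_div_add_atTop_nhds_zero_nat (𝕜 := ℝ)).const_mul 2
  filter_upwards [ContDiffBump.ae_convolution_tendsto_right_of_locallyIntegrable (K := 2) hout
    (Eventually.of_forall fun _ => le_rfl) hh] with p hp
  refine ⟨fun n q => (φ n).normed μ (p - q), fun n => ?_, ?_, fun U hU hpU => ?_⟩
  · rw [integral_sub_left_eq_self (fun q => (φ n).normed μ q) μ p, (φ n).integral_normed]
  · simpa only [convolution_eq_swap, ContinuousLinearMap.lsmul_apply, smul_eq_mul] using hp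
  · obtain ⟨r, hr, hrU⟩ := Metric.isOpen_iff.1 hU p hpU
    filter_upwards [hout.eventually (gt_mem_nhds hr)] with n hn
    exact isWeight_normed_sub (φ n) ((Metric.ball_subset_ball hn.le).trans hrU)

lemma ae_le_mul_of_forall_isWeight (hh : LocallyIntegrable h μ) {U V : Set E} (hU : IsOpen U)
    (hV : IsOpen V) {c : ℝ}
    (hUV : ∀ w w', IsWeight U w → IsWeight V w' →
      (∫ p, w p * h p ∂μ) * ∫ q, w' q ∂μ ≤ c * ((∫ p, w p ∂μ) * ∫ q, w' q * h q ∂μ)) :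
    ∀ᵐ p ∂μ.restrict U, ∀ᵐ q ∂μ.restrict V, h p ≤ c * h q := by
  have hae := ae_exists_isWeight_tendsto hh
  filter_upwards [ae_restrict_mem hU.measurableSet, ae_restrict_of_ae hae] with p hp hp'
  filter_upwards [ae_restrict_mem hV.measurableSet, ae_restrict_of_ae hae] with q hq hq'
  obtain ⟨w, hw1, hw, hwU⟩ := hp'
  obtain ⟨w', hw1', hw', hwV⟩ := hq'
  refine le_of_tendsto_of_tendsto hw (hw'.const_mul c) ?_
  filter_upwards [hwU U hU hp, hwV V hV hq] with n hn hn'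
  simpa only [hw1, hw1', mul_one, one_mul] using hUV _ _ hn hn'

end Differentiation

lemma essSup_le_mul_essInf {X Y : Type*} [MeasurableSpace X] [MeasurableSpace Y] {μ : Measure X}
    {ν : Measure Y} {f : X → ℝ≥0∞} {g : Y → ℝ≥0∞} {c : ℝ≥0∞} (hc : c ≠ 0) (hc' : c ≠ ⊤)
    (hfg : ∀ᵐ p ∂μ, ∀ᵐ q ∂ν, f p ≤ c * g q) : essSup f μ ≤ c * essInf g ν := by
  refine essSup_le_of_ae_le _ (hfg.mono fun p hp => ?_)
  rw [mul_comm, ← ENNReal.div_le_iff hc hc']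
  refine le_essInf_of_ae_le _ (hp.mono fun q hq => ?_)
  rwa [ENNReal.div_le_iff hc hc', mul_comm]

/-! ### The Harnack inequality -/

/-- The cutoff near the pole used for the upper bound. -/
def innerCutoff : ContDiffBump (0 : P3) := ⟨1 / 2 ^ 25, 1 / 2 ^ 24, by norm_num, by norm_num⟩

/-- The cutoff used for the lower bound, equal to `1` on `pastCube (1 / 4)`. -/
def outerCutoff : ContDiffBump (0 : P3) := ⟨1 / 4, 1 / 2, by norm_num, by norm_num⟩

lemma one_le_outerCutoff {z : P3} (hz : z ∈ pastCube (1 / 4)) : 1 ≤ outerCutoff z :=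
  (outerCutoff.one_of_mem_closedBall (mem_closedBall_zero_iff.2 (mem_pastCube_iff.1 hz).1)).ge

section Measures

variable {R : ℝ} {ν : Measure P2} [IsFiniteMeasure ν] {o : P2}

lemma IsMeasureSol.isKolmogorovSol_kinPoint (hR : R ≠ 0)
    (hν : IsMeasureSol (kinPoint R o '' pastCube (3 / 4)) ν) {θ s : ℝ} (hθ : θ ≤ 1 / 4) (hs : 0 ≤ s)
    (hs' : s ≤ 1 / 4) {a : P3} (ha : a ∈ kinCylinder θ s) :
    IsKolmogorovSol (pastCube (1 / 4)) (liftMeasure R ν (kinPoint R o a)) :=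
  hν.isKolmogorovSol_liftMeasure hR fun y hy => by
    rw [kinPoint_kinPoint]
    exact mem_image_of_mem _ (galileanMul_mem_pastCube hθ hs hs' ha hy)

lemma measureReal_pastCube_le_earlierBox (hR : R ≠ 0) {a b : P3}
    (ha : a ∈ kinCylinder (1 / 2 ^ 24) (1 / 2 ^ 10)) (hb : b ∈ kinCylinder (1 / 2 ^ 24) 0) :
    (liftMeasure R ν (kinPoint R o a)).real (pastCube (1 / 2 ^ 24)) ≤
      (liftMeasure R ν (kinPoint R o b)).real earlierBox := by
  have := isFiniteMeasureOnCompacts_liftMeasure (ν := ν) hR (kinPoint R o b)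
  exact ENNReal.toReal_mono isCompact_earlierBox.measure_lt_top.ne
    (liftMeasure_pastCube_le_earlierBox hR o ha hb)

end Measures

lemma exists_integral_kernelSource_le_mul_integral :
    ∃ c, 1 ≤ c ∧ ∀ {R : ℝ}, 0 < R → ∀ {ν : Measure P2} [IsFiniteMeasure ν] {o : P2},
      IsMeasureSol (kinPoint R o '' pastCube (3 / 4)) ν →
      ∀ {a b : P3}, a ∈ kinCylinder (1 / 2 ^ 24) (1 / 2 ^ 10) → b ∈ kinCylinder (1 / 2 ^ 24) 0 →
      ∀ {ε : ℝ}, 0 < ε → ε ≤ 1 / 2 ^ 12 →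
        ∫ z, innerCutoff z * kernelSource ε z ∂liftMeasure R ν (kinPoint R o a) ≤
          c * ∫ z, outerCutoff z * kernelSource ε z ∂liftMeasure R ν (kinPoint R o b) := by
  obtain ⟨C, hC, hupper⟩ := exists_integral_kernelSource_le (r := 1 / 2 ^ 24)
    innerCutoff.contDiff (by norm_num) innerCutoff.tsupport_eq.le innerCutoff.eventuallyEq_one
  refine ⟨2 * C + 1, by linarith, fun {R} hR ν _ o hν a b ha hb ε hε hε' => ?_⟩
  set μa := liftMeasure R ν (kinPoint R o a)
  set μb := liftMeasure R ν (kinPoint R o b)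
  have hμa : IsFiniteMeasureOnCompacts μa := isFiniteMeasureOnCompacts_liftMeasure hR.ne' _
  have hμb : IsFiniteMeasureOnCompacts μb := isFiniteMeasureOnCompacts_liftMeasure hR.ne' _
  have hsol_a : IsKolmogorovSol (pastCube (1 / 2 ^ 24)) μa := fun φ hφ hφc hφS =>
    hν.isKolmogorovSol_kinPoint hR.ne' (by norm_num) (by norm_num) (by norm_num) ha φ hφ hφc
      (hφS.trans (pastCube_subset (by norm_num)))
  have hsol_b : IsKolmogorovSol (pastCube (1 / 4)) μb :=
    hν.isKolmogorovSol_kinPoint hR.ne' (by norm_num) le_rfl (by norm_num) hb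
  have hlower : μb.real earlierBox ≤ 2 * ∫ z, outerCutoff z * kernelSource ε z ∂μb :=
    measureReal_earlierBox_le hε hε' hsol_b outerCutoff.continuous outerCutoff.hasCompactSupport
      (fun _ => outerCutoff.nonneg) fun _ => one_le_outerCutoff
  have hnonneg : 0 ≤ ∫ z, outerCutoff z * kernelSource ε z ∂μb :=
    integral_nonneg fun z => mul_nonneg outerCutoff.nonneg (kernelSource_nonneg hε z)
  calc ∫ z, innerCutoff z * kernelSource ε z ∂μa
      ≤ C * μa.real (pastCube (1 / 2 ^ 24)) := hupper μa hμa hsol_a ε hε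
    _ ≤ C * μb.real earlierBox := by gcongr; exact measureReal_pastCube_le_earlierBox hR.ne' ha hb
    _ ≤ C * (2 * ∫ z, outerCutoff z * kernelSource ε z ∂μb) := by gcongr
    _ ≤ (2 * C + 1) * ∫ z, outerCutoff z * kernelSource ε z ∂μb := by linarith

lemma exists_integral_mul_integral_le_of_isMeasureSol :
    ∃ c, 1 ≤ c ∧ ∀ {R : ℝ}, 0 < R → ∀ {ν : Measure P2} [IsFiniteMeasure ν] {o : P2},
      IsMeasureSol (kinPoint R o '' pastCube (3 / 4)) ν → ∀ w w' : P2 → ℝ,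
      IsWeight (kinPoint R o '' kinCylinder (1 / 2 ^ 24) (1 / 2 ^ 10)) w →
      IsWeight (kinPoint R o '' kinCylinder (1 / 2 ^ 24) 0) w' →
        (∫ p, w p ∂ν) * ∫ p, w' p ≤ c * ((∫ p, w p) * ∫ p, w' p ∂ν) := by
  obtain ⟨c, hc, hcompare⟩ := exists_integral_kernelSource_le_mul_integral
  refine ⟨c, hc, fun {R} hR ν _ o hν w w' hw hw' => ?_⟩
  have hlim := (tendsto_integral_mul_integral_kernelSource (ν := ν) hR hw.continuous
    hw.hasCompactSupport innerCutoff.continuous innerCutoff.hasCompactSupport).mul_const (∫ p, w' p)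
  have hlim' := ((tendsto_integral_mul_integral_kernelSource (ν := ν) hR hw'.continuous
    hw'.hasCompactSupport outerCutoff.continuous outerCutoff.hasCompactSupport).const_mul
      (∫ p, w p)).const_mul c
  have hsmall : ∀ᶠ l : ℝ in 𝓝[>] 0, l ^ 2 < 1 / 2 ^ 12 :=
    ((continuous_pow 2).tendsto' (0 : ℝ) 0 (by simp)).mono_left nhdsWithin_le_nhds
      |>.eventually (gt_mem_nhds (by norm_num))
  have hle := le_of_tendsto_of_tendsto hlim hlim' <| by
    filter_upwards [hsmall, self_mem_nhdsWithin] with l hl hl0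
    have hε : 0 < l ^ 2 := pow_pos hl0 2
    have hsource := continuous_kernelSource hε
    refine integral_mul_integral_le hw.nonneg hw'.nonneg
      (hw.continuous.integrable_of_hasCompactSupport hw.hasCompactSupport)
      (hw'.continuous.integrable_of_hasCompactSupport hw'.hasCompactSupport)
      (integrable_mul_integral_liftMeasure hR.ne' hw.continuous hw.hasCompactSupport
        (innerCutoff.continuous.mul hsource) innerCutoff.hasCompactSupport.mul_right)
      (integrable_mul_integral_liftMeasure hR.ne' hw'.continuous hw'.hasCompactSupport
        (outerCutoff.continuous.mul hsource) outerCutoff.hasCompactSupport.mul_right)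
      fun p q hp hq => ?_
    obtain ⟨a, ha, rfl⟩ := hw.mem_of_ne_zero p hp
    obtain ⟨b, hb, rfl⟩ := hw'.mem_of_ne_zero q hq
    exact hcompare hR hν ha hb hε hl.le
  have hpos : 0 < R ^ 4 * ∫ y, kernelSource 1 y :=
    mul_pos (pow_pos hR 4) integral_kernelSource_one_pos
  rw [innerCutoff.one_of_mem_closedBall (Metric.mem_closedBall_self innerCutoff.rIn_pos.le),
    outerCutoff.one_of_mem_closedBall (Metric.mem_closedBall_self outerCutoff.rIn_pos.le)] at hle
  refine le_of_mul_le_mul_left ?_ hpos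
  linarith

lemma kinCylinder_subset_pastCube {θ s : ℝ} (hθ : θ ≤ 1 / 4) (hs : 0 ≤ s) (hs' : s ≤ 1 / 4) :
    kinCylinder θ s ⊆ pastCube (3 / 4) := fun a ha => by
  have hzero : galileanMul a 0 = a := by ext <;> simp [galileanMul]
  rw [← hzero]
  exact galileanMul_mem_pastCube hθ hs hs' ha (mem_pastCube_iff.2 (by norm_num))

lemma isOpen_image_kinCylinder {R : ℝ} (hR : 0 < R) (o : P2) (θ s : ℝ) :
    IsOpen (kinPoint R o '' kinCylinder θ s) :=
  Aslant_prod_eq_image_kinCylinder hR θ o.1 o.2 s ▸ (isOpen_Aslant θ R o.1 o.2 s).prod isOpen_Ioo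

lemma IsDistribSol.exists_ae_le_mul :
    ∃ c, 1 ≤ c ∧ ∀ {Q : Set P2} {h : P2 → ℝ}, IsDistribSol Q h → (∀ p ∈ Q, 0 ≤ h p) →
      ∀ {R : ℝ}, 0 < R → ∀ {o : P2}, kinPoint R o '' kinCylinder 1 0 ⊆ Q →
        ∀ᵐ p ∂volume.restrict (kinPoint R o '' kinCylinder (1 / 2 ^ 24) (1 / 2 ^ 10)),
          ∀ᵐ q ∂volume.restrict (kinPoint R o '' kinCylinder (1 / 2 ^ 24) 0), h p ≤ c * h q := by
  obtain ⟨c, hc, hmeasure⟩ := exists_integral_mul_integral_le_of_isMeasureSol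
  refine ⟨c, hc, fun {Q h} hs h0 {R} hR {o} hQ => ?_⟩
  have : (volume : Measure (ℝ × ℝ)).IsAddHaarMeasure := Measure.prod.instIsAddHaarMeasure _ _
  set K := kinPoint R o '' pastCube (3 / 4)
  have hK : IsCompact K := (isCompact_pastCube _).image (continuous_kinPoint R o)
  have hKQ : K ⊆ Q := (image_mono pastCube_subset_kinCylinder).trans hQ
  have hK0 : ∀ p ∈ K, 0 ≤ h p := fun p hp => h0 p (hKQ hp)
  have hint : IntegrableOn h K := hs.1.integrableOn_compact_subset hKQ hK
  set ν := (volume.restrict K).withDensity fun p => ENNReal.ofReal (h p)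
  have hν : IsFiniteMeasure ν := isFiniteMeasure_withDensity_ofReal hint.2
  have hν_integral : ∀ w : P2 → ℝ, ∫ p, w p ∂ν = ∫ p, w p * K.indicator h p := fun w => by
    rw [integral_withDensity_ofReal hK.measurableSet hint.1.aemeasurable hK0,
      ← integral_indicator hK.measurableSet]
    simp only [indicator_mul_left, mul_comm]
  have hle := ae_le_mul_of_forall_isWeight (c := c)
    ((integrable_indicator_iff hK.measurableSet).2 hint).locallyIntegrable
    (isOpen_image_kinCylinder hR o (1 / 2 ^ 24) (1 / 2 ^ 10))
    (isOpen_image_kinCylinder hR o (1 / 2 ^ 24) 0) fun w w' hw hw' => by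
      rw [← hν_integral, ← hν_integral]
      exact hmeasure hR (hs.isMeasureSol hK hKQ hK0) w w' hw hw'
  have hmem : ∀ {s : ℝ}, 0 ≤ s → s ≤ 1 / 4 →
      ∀ᵐ p ∂volume.restrict (kinPoint R o '' kinCylinder (1 / 2 ^ 24) s), p ∈ K :=
    fun {s} hs0 hs1 => (ae_restrict_mem (isOpen_image_kinCylinder hR o _ s).measurableSet).mono
      fun p hp => image_mono (kinCylinder_subset_pastCube (by norm_num) hs0 hs1) hp
  filter_upwards [hle, hmem (by norm_num) (by norm_num)] with p hp hpK
  filter_upwards [hp, hmem le_rfl (by norm_num)] with q hq hqK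
  rwa [indicator_of_mem hpK, indicator_of_mem hqK] at hq

theorem statement_10_general :
    ∃ θ γ c : ℝ, 0 < θ ∧ θ < 1/2 ∧ 0 < γ ∧ γ < 1/2 ∧ 1 ≤ c ∧
      ∀ (Q : Set P2) (h : P2 → ℝ), IsDistribSol Q h → (∀ p ∈ Q, 0 ≤ h p) →
        ∀ R : ℝ, 0 < R →
          ∀ x₀ v₀ : ℝ,
            ({x : ℝ | ∃ t ∈ Set.Ioc (-R ^ 2) (0:ℝ), |x - x₀ - v₀ * t| < R ^ 3}
                ×ˢ Set.Ioo (v₀ - R) (v₀ + R)) ⊆ Q →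
            essSup (fun p : P2 => ENNReal.ofReal (h p))
                (volume.restrict
                  (Aslant θ R x₀ v₀ γ ×ˢ Set.Ioo (v₀ - θ * R) (v₀ + θ * R)))
              ≤ ENNReal.ofReal c *
                essInf (fun p : P2 => ENNReal.ofReal (h p))
                  (volume.restrict
                    (Aslant θ R x₀ v₀ 0 ×ˢ Set.Ioo (v₀ - θ * R) (v₀ + θ * R))) := by
  obtain ⟨c, hc, hharnack⟩ := IsDistribSol.exists_ae_le_mul
  refine ⟨1 / 2 ^ 24, 1 / 2 ^ 10, c, by norm_num, by norm_num, by norm_num, by norm_num, hc,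
    fun Q h hs h0 R hR x₀ v₀ hQ => ?_⟩
  have hcylinder : kinPoint R (x₀, v₀) '' kinCylinder 1 0 ⊆ Q := by
    rw [← Aslant_prod_eq_image_kinCylinder hR]
    simpa only [Aslant, one_mul, mul_zero, sub_zero] using hQ
  rw [Aslant_prod_eq_image_kinCylinder hR, Aslant_prod_eq_image_kinCylinder hR]
  have hc0 : 0 < c := zero_lt_one.trans_le hc
  refine essSup_le_mul_essInf (ENNReal.ofReal_pos.2 hc0).ne' ENNReal.ofReal_ne_top ?_
  filter_upwards [hharnack hs h0 hR hcylinder] with p hp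
  filter_upwards [hp] with q hq
  rw [← ENNReal.ofReal_mul hc0.le]
  exact ENNReal.ofReal_le_ofReal hq

theorem statement_10 :
    ∃ θ γ c : ℝ, 0 < θ ∧ θ < 1/2 ∧ 0 < γ ∧ γ < 1/2 ∧ 1 ≤ c ∧
      ∀ Q : Set P2, IsOpen Q →
        ∀ h hv : P2 → ℝ, IsWeakSolOpen Q h hv → (∀ p ∈ Q, 0 ≤ h p) →
          ∀ R : ℝ, 0 < R → R ≤ 2 →
            ∀ x₀ v₀ : ℝ,
              ({x : ℝ | ∃ t ∈ Set.Ioc (-R ^ 2) (0:ℝ), |x - x₀ - v₀ * t| < R ^ 3}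
                  ×ˢ Set.Ioo (v₀ - R) (v₀ + R)) ⊆ Q →
              essSup (fun p : P2 => ENNReal.ofReal (h p))
                  (volume.restrict
                    (Aslant θ R x₀ v₀ γ ×ˢ Set.Ioo (v₀ - θ * R) (v₀ + θ * R)))
                ≤ ENNReal.ofReal c *
                  essInf (fun p : P2 => ENNReal.ofReal (h p))
                    (volume.restrict
                      (Aslant θ R x₀ v₀ 0 ×ˢ Set.Ioo (v₀ - θ * R) (v₀ + θ * R))) := by
  obtain ⟨θ, γ, c, hθ, hθ', hγ, hγ', hc, hharnack⟩ := statement_10_general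
  exact ⟨θ, γ, c, hθ, hθ', hγ, hγ', hc, fun Q hQ h hv hs h0 R hR _ =>
    hharnack Q h (hs.isDistribSol hQ h0) h0 R hR⟩
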